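/- arXiv:2208.14773 — 2 statements merged into one kernel-verified Lean document; each statement's English description precedes it below -/
import Mathlib

section
/- Let q be a prime power, k ≥ 1, and n = 2k+1. Let B = B_0 ∪ B_{n-1} be a blocking set with respect to k-spaces in PG(2k+1,q) consisting of points and hyperplanes with |B| = (q+1)·q^k. Then B_0 is contained in a (k+1)-space of PG(2k+1,q). -/
/-!
Dimensions below are linear. Counting over the points off one of the hyperplanes shows that `a`
hyperplanes and `b` points covering a space of dimension `d + 2` satisfy
`a * q ^ d + b ≥ (q + 1) * q ^ d`; in the case of equality every point of the space off one of the
hyperplanes is covered exactly once. Averaging provides centres, i.e. subspaces that miss `B0` and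
lie in few members of `Bn`. Projecting from a centre, and applying the bound to the dual of the
trace on a subspace as well, forces `|Bn| = α * q ^ k` and `|B0| = β * q ^ k` with `α + β = q + 1`,
so that projecting from a `k`-dimensional centre leads to the case of equality.

If a hyperplane outside `Bn` contains a `k`-dimensional centre, then its number `c` of points is
`β * q ^ (k - 1)` or `q ^ k`. In the situation where centres are points, computing the sum of
`(c - β * q ^ (k - 1)) * (c - q ^ k)` over all hyperplanes shows that some hyperplane outside `Bn`
contains no centre. It contains a point of `B0`, and exactness of the dual systems along secants
propagates this to all of `B0`. In general one projects from two centres, the second one outside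
the subspace that the first one provides, and intersects the two resulting subspaces.
-/

section LinearAlgebra

open Module Submodule

variable {F V : Type*} [Field F] [AddCommGroup V] [Module F V]

theorem mem_span_singleton_symm_of_ne_zero {x y : V} (hy : y ≠ 0) (h : y ∈ F ∙ x) :
    x ∈ F ∙ y := by
  obtain ⟨c, rfl⟩ := mem_span_singleton.1 h
  rw [span_singleton_smul_eq (left_ne_zero_of_smul hy).isUnit]
  exact mem_span_singleton_self x

theorem finrank_span_pair_of_notMem {x y : V} (hx : x ≠ 0) (hy : y ∉ F ∙ x) :
    finrank F (span F {x, y}) = 2 := by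
  have hxy : LinearIndependent F ![x, y] :=
    (LinearIndependent.pair_iff' hx).2 fun a ha => hy (mem_span_singleton.2 ⟨a, ha⟩)
  rw [← Matrix.range_cons_cons_empty, finrank_span_eq_card hxy, Fintype.card_fin]

variable [FiniteDimensional F V]

theorem finrank_comap_mkQ (U : Submodule F V) (W : Submodule F (V ⧸ U)) :
    finrank F (W.comap U.mkQ) = finrank F W + finrank F U := by
  have hcongr := (quotientQuotientEquivQuotient U _ (le_comap_mkQ U W)).finrank_eq
  rw [map_comap_eq_of_surjective U.mkQ_surjective] at hcongr
  have hV := finrank_quotient_add_finrank (W.comap U.mkQ)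
  have hVU := finrank_quotient_add_finrank W
  have hU := finrank_quotient_add_finrank U
  omega

theorem exists_le_finrank_eq {W : Submodule F V} {m : ℕ} (hW : finrank F W ≤ m)
    (hm : m ≤ finrank F V) : ∃ X, W ≤ X ∧ finrank F X = m := by
  have hquot := finrank_quotient_add_finrank W
  obtain ⟨b, hb⟩ : ∃ b : Fin (m - finrank F W) → V ⧸ W, LinearIndependent F b :=
    exists_linearIndependent_of_le_finrank (by omega)
  refine ⟨(span F (Set.range b)).comap W.mkQ, le_comap_mkQ _ _, ?_⟩
  rw [finrank_comap_mkQ, finrank_span_eq_card hb, Fintype.card_fin]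
  omega

theorem ker_eq_ker_of_le {f g : Dual F V} (hf : f ≠ 0) (hg : g ≠ 0)
    (h : LinearMap.ker f ≤ LinearMap.ker g) : LinearMap.ker f = LinearMap.ker g := by
  apply eq_of_le_of_finrank_eq h
  have hf' := Dual.finrank_ker_add_one_of_ne_zero hf
  have hg' := Dual.finrank_ker_add_one_of_ne_zero hg
  omega

theorem prod_surjective_of_ker_ne {f g : Dual F V} (hf : f ≠ 0) (hg : g ≠ 0)
    (h : LinearMap.ker f ≠ LinearMap.ker g) : Function.Surjective (f.prod g) := by
  obtain ⟨x, hfx, hgx⟩ := SetLike.not_le_iff_exists.1 (mt (ker_eq_ker_of_le hf hg) h)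
  obtain ⟨y, hgy, hfy⟩ := SetLike.not_le_iff_exists.1 (mt (ker_eq_ker_of_le hg hf) h.symm)
  rintro ⟨a, b⟩
  refine ⟨(a / f y) • y + (b / g x) • x, ?_⟩
  simp_all

end LinearAlgebra

section Counting

open Finset Module Submodule
open scoped Classical

theorem sum_card_filter_eq_sum_card_filter_and {α β : Type*} [Fintype α] [Fintype β]
    (P : α → Prop) (R : α → β → Prop) :
    ∑ a with P a, #{b | R a b} = ∑ b, #{a | P a ∧ R a b} := by
  simp_rw [← filter_filter]
  exact sum_card_bipartiteAbove_eq_sum_card_bipartiteBelow R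

variable {F V : Type*} [Field F] [AddCommGroup V] [Module F V] [Fintype V]

theorem card_filter_mem_span_singleton (g : Dual F V) {p : V} (hp : p ≠ 0) :
    #{x | g x = 1 ∧ p ∈ F ∙ x} = if g p = 0 then 0 else 1 := by
  split_ifs with hgp
  · refine card_filter_eq_zero_iff.2 ?_
    rintro x - ⟨hx, hpx⟩
    obtain ⟨c, rfl⟩ := mem_span_singleton.1 hpx
    simp_all
  · refine card_eq_one.2 ⟨(g p)⁻¹ • p, ?_⟩
    ext x
    simp only [mem_filter_univ, mem_singleton, mem_span_singleton]
    constructor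
    · rintro ⟨hx, c, rfl⟩
      have hc : c ≠ 0 := left_ne_zero_of_smul hp
      simp [hx, hc]
    · rintro rfl
      exact ⟨by simp [hgp], g p, by simp [hgp]⟩

theorem card_filter_eq_one_and_eq_zero_of_ker_eq {f g : Dual F V}
    (h : LinearMap.ker f = LinearMap.ker g) : #{x | g x = 1 ∧ f x = 0} = 0 := by
  refine card_filter_eq_zero_iff.2 ?_
  rintro x - ⟨hgx, hfx⟩
  have hx : g x = 0 := LinearMap.mem_ker.1 (h ▸ LinearMap.mem_ker.2 hfx)
  simp_all

variable [Fintype F]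

local notation "q" => Fintype.card F

theorem card_filter_linearMap_eq {W : Type*} [AddCommGroup W] [Module F W] {φ : V →ₗ[F] W}
    (hφ : Function.Surjective φ) (w : W) : #{x | φ x = w} = q ^ finrank F (LinearMap.ker φ) := by
  rw [AddMonoidHom.card_fiber_eq_of_mem_range φ (hφ w) (hφ 0), ← card_eq_pow_finrank,
    Fintype.card_subtype]
  simp only [LinearMap.mem_ker]

theorem card_filter_dual_eq {n : ℕ} (hV : finrank F V = n + 1) {g : Dual F V} (hg : g ≠ 0)
    (c : F) : #{x | g x = c} = q ^ n := by
  rw [card_filter_linearMap_eq (LinearMap.surjective hg)]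
  congr 1
  have := Dual.finrank_ker_add_one_of_ne_zero hg
  omega

theorem card_filter_dual_eq_and_eq {n : ℕ} (hV : finrank F V = n + 2) {f g : Dual F V}
    (hf : f ≠ 0) (hg : g ≠ 0) (hfg : LinearMap.ker f ≠ LinearMap.ker g) (a b : F) :
    #{x | f x = a ∧ g x = b} = q ^ n := by
  have hsurj := prod_surjective_of_ker_ne hf hg hfg
  have hker := LinearMap.finrank_range_add_finrank_ker (f.prod g)
  rw [LinearMap.range_eq_top.2 hsurj, finrank_top, finrank_prod, finrank_self, hV] at hker
  have hcard := card_filter_linearMap_eq hsurj (a, b)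
  simp only [LinearMap.prod_apply, Function.prod_apply, Prod.mk.injEq] at hcard
  rw [hcard]
  congr 1
  omega

theorem sum_card_filter_dual_eq_zero {κ : Type*} [Fintype κ] {n : ℕ} (hV : finrank F V = n + 1)
    {f : κ → Dual F V} (hf : ∀ j, f j ≠ 0) :
    ∑ u, #{j | f j u = 0} = Fintype.card κ * q ^ n := by
  have hswap := sum_card_filter_eq_sum_card_filter_and (fun _ : V => True) fun u j => f j u = 0
  simpa only [filter_true, true_and, card_filter_dual_eq hV (hf _), sum_const,
    card_univ, smul_eq_mul] using hswap

theorem sum_sq_card_filter_dual_eq_zero {κ : Type*} [Fintype κ] {n : ℕ}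
    (hV : finrank F V = n + 2) {f : κ → Dual F V} (hf : ∀ j, f j ≠ 0)
    (hker : Function.Injective fun j => LinearMap.ker (f j)) :
    ∑ u, #{j | f j u = 0} ^ 2 + Fintype.card κ * q ^ n =
      Fintype.card κ * q ^ (n + 1) + Fintype.card κ ^ 2 * q ^ n := by
  have hform : ∀ j, ∑ u with f j u = 0, #{j' | f j' u = 0} + q ^ n =
      q ^ (n + 1) + Fintype.card κ * q ^ n := by
    intro j
    have hother : ∀ j' ∈ univ.erase j, #{u | f j u = 0 ∧ f j' u = 0} = q ^ n := fun j' hj' =>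
      card_filter_dual_eq_and_eq hV (hf j) (hf j') (hker.ne (ne_of_mem_erase hj').symm) 0 0
    rw [sum_card_filter_eq_sum_card_filter_and, ← sum_erase_add _ _ (mem_univ j),
      sum_congr rfl hother, sum_const, card_erase_of_mem (mem_univ j), card_univ, smul_eq_mul]
    simp only [and_self, card_filter_dual_eq (n := n + 1) hV (hf j)]
    rw [add_right_comm, ← add_one_mul, Nat.sub_one_add_one (Fintype.card_pos_iff.2 ⟨j⟩).ne',
      add_comm]
  calc ∑ u, #{j | f j u = 0} ^ 2 + Fintype.card κ * q ^ n
      = ∑ j, (∑ u with f j u = 0, #{j' | f j' u = 0} + q ^ n) := by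
        simp only [sum_add_distrib, sum_filter, sum_const, card_univ, smul_eq_mul]
        rw [sum_comm]
        simp only [← sum_filter, sum_const, smul_eq_mul, sq]
    _ = _ := by
        simp only [hform, sum_const, card_univ, smul_eq_mul]
        ring

theorem sum_card_filter_dual_eq_zero_sub_mul_sub {κ : Type*} [Fintype κ] {n : ℕ}
    (hV : finrank F V = n + 2) {f : κ → Dual F V} (hf : ∀ j, f j ≠ 0)
    (hker : Function.Injective fun j => LinearMap.ker (f j)) (a b : ℤ) :
    ∑ u, ((#{j | f j u = 0} : ℤ) - a) * (#{j | f j u = 0} - b) =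
      Fintype.card κ * (Fintype.card κ - 1) * q ^ n +
        (1 - a - b) * Fintype.card κ * q ^ (n + 1) + a * b * q ^ (n + 2) := by
  have hfirst := sum_card_filter_dual_eq_zero (n := n + 1) hV hf
  have hsecond := sum_sq_card_filter_dual_eq_zero hV hf hker
  zify at hfirst hsecond
  have hexpand : ∀ u, ((#{j | f j u = 0} : ℤ) - a) * (#{j | f j u = 0} - b) =
      (#{j | f j u = 0} : ℤ) ^ 2 - (a + b) * #{j | f j u = 0} + a * b := fun u => by ring
  simp only [hexpand, sum_add_distrib, sum_sub_distrib, ← mul_sum, sum_const, card_univ, hfirst,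
    card_eq_pow_finrank (K := F) (V := V), hV, nsmul_eq_mul]
  push_cast
  linarith

theorem card_filter_eq_one_and_eq_zero {n : ℕ} (hV : finrank F V = n + 2) {f g : Dual F V}
    (hf : f ≠ 0) (hg : g ≠ 0) :
    #{x | g x = 1 ∧ f x = 0} = if LinearMap.ker f = LinearMap.ker g then 0 else q ^ n := by
  split_ifs with hfg
  · exact card_filter_eq_one_and_eq_zero_of_ker_eq hfg
  · exact card_filter_dual_eq_and_eq hV hg hf (Ne.symm hfg) 1 0

theorem card_mul_card_filter_eq_one_and_eq_zero_le {f g : Dual F V} (hf : f ≠ 0) (hg : g ≠ 0) :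
    q * #{x | g x = 1 ∧ f x = 0} ≤ #{x | g x = 1} := by
  by_cases hfg : LinearMap.ker f = LinearMap.ker g
  · simp [card_filter_eq_one_and_eq_zero_of_ker_eq hfg]
  obtain ⟨n, hV⟩ : ∃ n, finrank F V = n + 2 := by
    have hker := LinearMap.finrank_range_add_finrank_ker (g.prod f)
    rw [LinearMap.range_eq_top.2 (prod_surjective_of_ker_ne hg hf (Ne.symm hfg)), finrank_top,
      finrank_prod, finrank_self] at hker
    exact ⟨_, (add_comm _ _).trans hker |>.symm⟩
  rw [card_filter_eq_one_and_eq_zero hV hf hg, if_neg hfg,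
    card_filter_dual_eq (n := n + 1) hV hg, pow_succ']

theorem card_filter_eq_zero_or_exists_mem_span_singleton_le {ι : Type*} [Fintype ι] {p : ι → V}
    (hp : ∀ i, p i ≠ 0) : #{x | x = 0 ∨ ∃ i, p i ∈ F ∙ x} ≤ Fintype.card ι * (q - 1) + 1 := by
  have hsub : ({x | x = 0 ∨ ∃ i, p i ∈ F ∙ x} : Finset V) ⊆
      insert 0 (univ.image fun a : ι × Fˣ => a.2 • p a.1) := by
    intro x hx
    refine mem_insert.2 ((mem_filter.1 hx).2.imp_right fun ⟨i, hi⟩ => ?_)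
    obtain ⟨c, hc⟩ := mem_span_singleton.1 hi
    have hc0 : c ≠ 0 := by
      rintro rfl
      exact hp i (by rw [← hc, zero_smul])
    refine mem_image.2 ⟨(i, (Units.mk0 c hc0)⁻¹), mem_univ _, ?_⟩
    rw [← hc]
    exact inv_smul_smul (Units.mk0 c hc0) x
  calc #{x | x = 0 ∨ ∃ i, p i ∈ F ∙ x}
      ≤ #(univ.image fun a : ι × Fˣ => a.2 • p a.1) + 1 :=
        (card_le_card hsub).trans (card_insert_le ..)
    _ ≤ Fintype.card (ι × Fˣ) + 1 := by gcongr; exact card_image_le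
    _ = Fintype.card ι * (q - 1) + 1 := by rw [Fintype.card_prod, Fintype.card_units]

theorem exists_mem_notMem_card_mul_card_filter_le {κ : Type*} [Fintype κ] {V : Type*}
    [AddCommGroup V] [Module F V] [Finite V] (f : κ → Dual F V)
    {Y Z : Submodule F V} (hYZ : ¬ Y ≤ Z) (hY : ∀ j, ¬ Y ≤ LinearMap.ker (f j)) :
    ∃ v ∈ Y, v ∉ Z ∧ q * #{j | f j v = 0} ≤ Fintype.card κ := by
  have : Fintype V := Fintype.ofFinite V
  obtain ⟨y, hyY, hyZ⟩ := SetLike.not_le_iff_exists.1 hYZ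
  obtain ⟨χ, hχy, hχZ⟩ := exists_le_ker_of_notMem hyZ
  let g : Dual F Y := χ.domRestrict Y
  have hg : g ≠ 0 := fun h => hχy (LinearMap.congr_fun h ⟨y, hyY⟩)
  have hf : ∀ j, (f j).domRestrict Y ≠ 0 := fun j h =>
    hY j fun v hv => LinearMap.congr_fun h ⟨v, hv⟩
  have hslice : ({v : Y | g v = 1} : Finset Y).Nonempty :=
    (LinearMap.surjective hg 1).imp fun v hv => by simpa using hv
  obtain ⟨v, hv, hle⟩ : ∃ v ∈ ({v : Y | g v = 1} : Finset Y),
      q * #{j | f j v = 0} ≤ Fintype.card κ := by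
    apply exists_le_of_sum_le hslice
    calc ∑ v : Y with g v = 1, q * #{j | f j v = 0}
        = ∑ j, q * #{v : Y | g v = 1 ∧ (f j).domRestrict Y v = 0} := by
          rw [← mul_sum, sum_card_filter_eq_sum_card_filter_and, mul_sum]
          rfl
      _ ≤ ∑ _j : κ, #{v : Y | g v = 1} :=
          sum_le_sum fun j _ => card_mul_card_filter_eq_one_and_eq_zero_le (hf j) hg
      _ = ∑ v : Y with g v = 1, Fintype.card κ := by
          simp [mul_comm]
  refine ⟨v, v.2, fun hvZ => ?_, hle⟩
  have hχv : χ v = 0 := hχZ hvZ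
  have hgv : χ v = 1 := (mem_filter.1 hv).2
  simp_all

end Counting

section Arithmetic

theorem pred_mul_succ_mul_lt_pow_three {Q a a' : ℕ} (hQ : 2 ≤ Q) (ha : a + a' = Q + 2) :
    (Q - 1) * ((a + 1) * a') < Q ^ 3 := by
  obtain ⟨r, rfl⟩ : ∃ r, Q = r + 2 := ⟨Q - 2, by omega⟩
  have hAMGM : 4 * ((a + 1) * a') ≤ (r + 5) ^ 2 := by
    rw [show r + 5 = (a + 1) + a' by omega, sq]
    linarith [four_mul_le_sq_add (a + 1) a']
  have hcubic : (r + 1) * (r + 5) ^ 2 < 4 * (r + 2) ^ 3 := by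
    ring_nf
    omega
  rw [show r + 2 - 1 = r + 1 by omega]
  nlinarith

theorem succ_mul_pow_le_of_pow_le {Q N d : ℕ} (hQ : 2 ≤ Q)
    (h : Q ^ (d + 2) ≤ N * (Q - 1) + 1) : (Q + 1) * Q ^ d ≤ N := by
  obtain ⟨r, rfl⟩ : ∃ r, Q = r + 1 := ⟨Q - 1, by omega⟩
  have hpos : 1 ≤ (r + 1) ^ d := Nat.one_le_pow _ _ (by omega)
  refine Nat.le_of_mul_le_mul_right (c := r) ?_ (by omega)
  simp only [Nat.add_sub_cancel] at h
  nlinarith [pow_add (r + 1) d 2]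

theorem mul_succ_mul_pow_lt {Q a a' k d N : ℕ} (hQ : 2 ≤ Q) (ha : a + a' = Q + 2)
    (hN : N < a' * Q ^ d) :
    (N * (Q - 1) + 1) * (a * Q ^ k + 1) < Q ^ (k + d + 3) := by
  have hpos : 0 < Q ^ k * Q ^ d := by positivity
  calc (N * (Q - 1) + 1) * (a * Q ^ k + 1)
      ≤ ((Q - 1) * (a' * Q ^ d)) * ((a + 1) * Q ^ k) := by
        gcongr ?_ * ?_
        · obtain ⟨r, rfl⟩ : ∃ r, Q = r + 2 := ⟨Q - 2, by omega⟩
          rw [show r + 2 - 1 = r + 1 by omega]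
          nlinarith
        · rw [add_one_mul]
          gcongr
          exact Nat.one_le_pow _ _ (by omega)
    _ = Q ^ k * Q ^ d * ((Q - 1) * ((a + 1) * a')) := by ring
    _ < Q ^ k * Q ^ d * Q ^ 3 := by gcongr; exact pred_mul_succ_mul_lt_pow_three hQ ha
    _ = Q ^ (k + d + 3) := by ring

theorem sub_mul_sub_add_lt {Q α β N P : ℤ} (hQ : 2 ≤ Q) (hβ : 2 ≤ β) (hN : 0 < N)
    (hαβ : α + β = Q + 1) (hP : P ≤ α * Q * (Q - 1)) :
    (β * (N * Q) - β * N) * (β * (N * Q) - Q * N) + P * (β * N * (Q * N)) <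
      β * (N * Q) * (β * (N * Q) - 1) * (N * Q ^ 2) +
        (1 - β * N - Q * N) * (β * (N * Q)) * (N * Q ^ 3) + β * N * (Q * N) * (N * Q ^ 4) := by
  obtain rfl : α = Q + 1 - β := by linarith
  have hX : 0 < β * N * (Q * N) := by positivity
  have hlt : β - 1 + (Q + 1 - β) * Q < Q ^ 2 := by nlinarith
  calc (β * (N * Q) - β * N) * (β * (N * Q) - Q * N) + P * (β * N * (Q * N))
      ≤ (β * (N * Q) - β * N) * (β * (N * Q) - Q * N) +
          (Q + 1 - β) * Q * (Q - 1) * (β * N * (Q * N)) := by gcongr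
    _ = β * N * (Q * N) * ((Q - 1) * (β - 1 + (Q + 1 - β) * Q)) := by ring
    _ < β * N * (Q * N) * ((Q - 1) * Q ^ 2) := by
        gcongr
        linarith
    _ = _ := by ring

end Arithmetic

/-- A family of points of the projective space of `V`, given by nonzero vectors, together with a
family of hyperplanes, given by nonzero functionals. Families rather than sets are used because
projecting from a subspace may identify points. -/
structure PointHyperplaneSystem (F V ι κ : Type*) [Field F] [AddCommGroup V] [Module F V] where
  point : ι → V
  form : κ → Module.Dual F V
  point_ne_zero : ∀ i, point i ≠ 0
  form_ne_zero : ∀ j, form j ≠ 0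

namespace PointHyperplaneSystem

open Finset Module Submodule
open LinearMap (ker mem_ker)
open scoped Classical

section Operations

variable {F V ι κ : Type*} [Field F] [AddCommGroup V] [Module F V]
  (S : PointHyperplaneSystem F V ι κ)

/-- Every subspace of (linear) dimension `m` contains one of the points or lies in one of the
hyperplanes; the blocking sets with respect to `k`-spaces correspond to `m = k + 1`. -/
def IsBlocking (m : ℕ) : Prop :=
  ∀ W : Submodule F V, finrank F W = m → (∃ i, S.point i ∈ W) ∨ ∃ j, W ≤ ker (S.form j)

/-- The projection of a system from a subspace `U` without points; only the hyperplanes through `U`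
survive. -/
def quotient (U : Submodule F V) (hU : ∀ i, S.point i ∉ U) :
    PointHyperplaneSystem F (V ⧸ U) ι {j // U ≤ ker (S.form j)} where
  point i := U.mkQ (S.point i)
  form j := U.liftQ (S.form j) j.2
  point_ne_zero i h := hU i (by simpa using h)
  form_ne_zero j h :=
    S.form_ne_zero j (by rw [← U.liftQ_mkQ (S.form j) j.2, h, LinearMap.zero_comp])

/-- The trace of a system on a subspace `W`; hyperplanes containing `W` are dropped. -/
def restrict (W : Submodule F V) :
    PointHyperplaneSystem F W {i // S.point i ∈ W} {j // ¬ W ≤ ker (S.form j)} where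
  point i := ⟨S.point i, i.2⟩
  form j := (S.form j).domRestrict W
  point_ne_zero i h := S.point_ne_zero i (congrArg Subtype.val h)
  form_ne_zero j h := j.2 fun v hv => LinearMap.congr_fun h ⟨v, hv⟩

/-- The system of the dual projective space obtained by exchanging points and hyperplanes. -/
def dual : PointHyperplaneSystem F (Dual F V) κ ι where
  point := S.form
  form i := Dual.eval F V (S.point i)
  point_ne_zero := S.form_ne_zero
  form_ne_zero i h := S.point_ne_zero i ((eval_apply_eq_zero_iff F _).1 h)

variable {S}

theorem IsBlocking.quotient [FiniteDimensional F V] {m u : ℕ} (hS : S.IsBlocking (m + u))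
    {U : Submodule F V} (hU : ∀ i, S.point i ∉ U) (hu : finrank F U = u) :
    (S.quotient U hU).IsBlocking m := by
  intro W hW
  have hcomap : finrank F (W.comap U.mkQ) = m + u := by rw [finrank_comap_mkQ, hW, hu]
  rcases hS _ hcomap with ⟨i, hi⟩ | ⟨j, hj⟩
  · exact Or.inl ⟨i, hi⟩
  · refine Or.inr ⟨⟨j, (le_comap_mkQ U W).trans hj⟩, fun w hw => ?_⟩
    obtain ⟨v, rfl⟩ := U.mkQ_surjective w
    exact hj hw

theorem isBlocking_restrict_iff {m : ℕ} {W : Submodule F V} :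
    (S.restrict W).IsBlocking m ↔ ∀ X ≤ W, finrank F X = m →
      (∃ i, S.point i ∈ X) ∨ ∃ j, ¬ W ≤ ker (S.form j) ∧ X ≤ ker (S.form j) := by
  constructor
  · intro h X hXW hX
    rcases h (X.comap W.subtype) (by rw [(comapSubtypeEquivOfLe hXW).finrank_eq, hX]) with
      ⟨i, hi⟩ | ⟨j, hj⟩
    · exact Or.inl ⟨i, hi⟩
    · exact Or.inr ⟨j, j.2, fun x hx => hj (x := ⟨x, hXW hx⟩) hx⟩
  · intro h X hX
    rcases h (X.map W.subtype) (map_subtype_le W X) (by rw [finrank_map_subtype_eq, hX]) with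
      ⟨i, hi⟩ | ⟨j, hjW, hj⟩
    · obtain ⟨x, hx, hxi⟩ := mem_map.1 hi
      have hiW : S.point i ∈ W := hxi ▸ x.2
      obtain rfl : x = ⟨S.point i, hiW⟩ := Subtype.ext hxi
      exact Or.inl ⟨⟨i, hiW⟩, hx⟩
    · exact Or.inr ⟨⟨j, hjW⟩, fun x hx => hj (mem_map_of_mem hx)⟩

theorem IsBlocking.restrict {m : ℕ} (hS : S.IsBlocking m) {W : Submodule F V}
    (hW : ∀ j, ¬ W ≤ ker (S.form j)) : (S.restrict W).IsBlocking m :=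
  isBlocking_restrict_iff.2 fun X _ hX => (hS X hX).imp_right fun ⟨j, hj⟩ => ⟨j, hW j, hj⟩

theorem IsBlocking.dual [FiniteDimensional F V] {m n : ℕ} (hV : finrank F V = m + n)
    (hS : S.IsBlocking m) : S.dual.IsBlocking n := by
  intro W hW
  have hfinrank := Subspace.finrank_add_finrank_dualCoannihilator_eq W
  rcases hS W.dualCoannihilator (by omega) with ⟨i, hi⟩ | ⟨j, hj⟩
  · exact Or.inr ⟨i, fun φ hφ => (mem_dualCoannihilator _).1 hi φ hφ⟩
  · refine Or.inl ⟨j, ?_⟩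
    rw [← Subspace.dualCoannihilator_dualAnnihilator_eq (W := W)]
    exact (mem_dualAnnihilator _).2 fun v hv => hj hv

end Operations

section Multiplicity

variable {F V ι κ : Type*} [Field F] [AddCommGroup V] [Module F V] [Fintype ι] [Fintype κ]
  (S : PointHyperplaneSystem F V ι κ)

/-- The number of points on, plus the number of hyperplanes through, the point spanned by the
nonzero vector `x`. -/
noncomputable def mult (x : V) : ℕ := #{i | S.point i ∈ F ∙ x} + #{j | S.form j x = 0}

theorem mult_smul {c : F} (hc : c ≠ 0) (x : V) : S.mult (c • x) = S.mult x := by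
  simp only [mult, span_singleton_smul_eq hc.isUnit, map_smul, smul_eq_zero, hc, false_or]

variable {S}

theorem IsBlocking.one_le_mult (hS : S.IsBlocking 1) {x : V} (hx : x ≠ 0) : 1 ≤ S.mult x := by
  rcases hS (F ∙ x) (finrank_span_singleton hx) with ⟨i, hi⟩ | ⟨j, hj⟩
  · exact le_add_right (card_pos.2 ⟨i, mem_filter.2 ⟨mem_univ _, hi⟩⟩)
  · exact le_add_left
      (card_pos.2 ⟨j, mem_filter.2 ⟨mem_univ _, hj (mem_span_singleton_self x)⟩⟩)

theorem mult_restrict {W : Submodule F V} (hW : ∀ j, ¬ W ≤ ker (S.form j)) (x : W) :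
    (S.restrict W).mult x = S.mult x := by
  have hmem : ∀ i, (S.restrict W).point i ∈ F ∙ x ↔ S.point i ∈ F ∙ (x : V) := fun i => by
    simp only [mem_span_singleton, Subtype.ext_iff]
    rfl
  have hpoints : #{i | (S.restrict W).point i ∈ F ∙ x} = #{i | S.point i ∈ F ∙ (x : V)} := by
    simp only [hmem, ← Fintype.card_subtype]
    exact Fintype.card_congr (Equiv.subtypeSubtypeEquivSubtype
      fun hi => (span_singleton_le_iff_mem _ _).2 x.2 hi)
  have hforms : #{j | (S.restrict W).form j x = 0} = #{j | S.form j x = 0} := by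
    simp only [← Fintype.card_subtype]
    exact Fintype.card_congr (Equiv.subtypeSubtypeEquivSubtype
      (p := fun j => ¬ W ≤ ker (S.form j)) (q := fun j => S.form j x = 0) fun _ => hW _)
  rw [mult, hpoints, hforms, mult]

variable [Fintype F]

local notation "q" => Fintype.card F

theorem sum_mult [Fintype V] {d : ℕ} (hV : finrank F V = d + 2) {g : Dual F V} (hg : g ≠ 0) :
    ∑ x with g x = 1, S.mult x =
      #{j | ker (S.form j) ≠ ker g} * q ^ d + #{i | g (S.point i) ≠ 0} := by
  have hforms : ∑ x with g x = 1, #{j | S.form j x = 0} =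
      #{j | ker (S.form j) ≠ ker g} * q ^ d := by
    simp only [sum_card_filter_eq_sum_card_filter_and,
      card_filter_eq_one_and_eq_zero hV (S.form_ne_zero _) hg]
    simp [sum_ite]
  have hpoints : ∑ x with g x = 1, #{i | S.point i ∈ F ∙ x} = #{i | g (S.point i) ≠ 0} := by
    simp only [sum_card_filter_eq_sum_card_filter_and,
      card_filter_mem_span_singleton g (S.point_ne_zero _)]
    simp [sum_ite]
  simp only [mult, sum_add_distrib, hforms, hpoints, add_comm]

theorem sum_mult_form_add_pow_le [Fintype V] {d : ℕ} (hV : finrank F V = d + 2) (j₀ : κ) :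
    ∑ x with S.form j₀ x = 1, S.mult x + q ^ d ≤
      Fintype.card κ * q ^ d + #{i | S.form j₀ (S.point i) ≠ 0} := by
  have hlt : #{j | ker (S.form j) ≠ ker (S.form j₀)} < Fintype.card κ :=
    card_lt_univ_of_notMem (x := j₀) (by simp)
  rw [sum_mult hV (S.form_ne_zero j₀), add_right_comm, ← add_one_mul]
  gcongr
  exact hlt

theorem IsBlocking.pow_le_sum_mult [Fintype V] {d : ℕ} (hV : finrank F V = d + 1)
    (hS : S.IsBlocking 1) {g : Dual F V} (hg : g ≠ 0) : q ^ d ≤ ∑ x with g x = 1, S.mult x := by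
  rw [← card_filter_dual_eq hV hg 1, card_eq_sum_ones]
  refine sum_le_sum fun x hx => hS.one_le_mult ?_
  rintro rfl
  simp at hx

end Multiplicity

section Exact

variable {F V ι κ : Type*} [Field F] [AddCommGroup V] [Module F V] [Fintype ι] [Fintype κ]
  {S : PointHyperplaneSystem F V ι κ}

/-- The points lie on no hyperplane, and apart from the points common to all the hyperplanes every
point of the space is covered exactly once: the equality case of the covering bound. -/
structure IsExact (S : PointHyperplaneSystem F V ι κ) : Prop where
  form_point_ne_zero : ∀ j i, S.form j (S.point i) ≠ 0
  mult_eq_one : ∀ j x, S.form j x ≠ 0 → S.mult x = 1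

namespace IsExact

variable (hS : S.IsExact)
include hS

theorem restrict {W : Submodule F V} (hW : ∀ j, ¬ W ≤ ker (S.form j)) : (S.restrict W).IsExact where
  form_point_ne_zero j i := hS.form_point_ne_zero j i
  mult_eq_one j x hx := (mult_restrict hW x).trans (hS.mult_eq_one j x hx)

theorem form_apply_eq_zero {j₁ j₂ : κ} (hj : j₁ ≠ j₂) {x : V} (h₁ : S.form j₁ x = 0)
    (h₂ : S.form j₂ x = 0) (j : κ) : S.form j x = 0 := by
  by_contra hx
  have hone := hS.mult_eq_one j x hx
  have htwo : 1 < #{j | S.form j x = 0} :=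
    one_lt_card.2 ⟨j₁, by simp [h₁], j₂, by simp [h₂], hj⟩
  rw [mult] at hone
  omega

theorem point_notMem_span_singleton [Nonempty κ] {i₁ i₂ : ι} (hi : i₁ ≠ i₂) :
    S.point i₂ ∉ F ∙ S.point i₁ := by
  intro h₂
  have hone := hS.mult_eq_one _ _ (hS.form_point_ne_zero (Classical.arbitrary κ) i₁)
  have htwo : 1 < #{i | S.point i ∈ F ∙ S.point i₁} :=
    one_lt_card.2 ⟨i₁, by simp [mem_span_singleton_self], i₂, by simp [h₂], hi⟩
  rw [mult] at hone
  omega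

theorem ker_form_eq_or_injective [FiniteDimensional F V] :
    (∀ j j', ker (S.form j) = ker (S.form j')) ∨ Function.Injective fun j => ker (S.form j) := by
  refine or_iff_not_imp_right.2 fun hinj => ?_
  simp only [Function.Injective, not_forall] at hinj
  obtain ⟨j₁, j₂, hker, hne⟩ := hinj
  suffices h : ∀ j, ker (S.form j₁) = ker (S.form j) from fun j j' => (h j).symm.trans (h j')
  refine fun j => ker_eq_ker_of_le (S.form_ne_zero _) (S.form_ne_zero _) fun x hx => ?_
  exact hS.form_apply_eq_zero hne hx (hker.le hx) j

end IsExact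

end Exact

section Covering

variable {F V ι κ : Type*} [Field F] [Fintype F] [AddCommGroup V] [Module F V]
  [FiniteDimensional F V] [Fintype ι] {S : PointHyperplaneSystem F V ι κ} {d : ℕ}

local notation "q" => Fintype.card F

theorem IsBlocking.pow_finrank_le_of_isEmpty [IsEmpty κ] (hS : S.IsBlocking 1) :
    q ^ finrank F V ≤ Fintype.card ι * (q - 1) + 1 := by
  have : Finite V := Module.finite_of_finite F
  have : Fintype V := Fintype.ofFinite V
  have hcover : ({x | x = 0 ∨ ∃ i, S.point i ∈ F ∙ x} : Finset V) = univ := by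
    refine filter_true_of_mem fun x _ => or_iff_not_imp_left.2 fun hx => ?_
    exact (hS (F ∙ x) (finrank_span_singleton hx)).resolve_right fun ⟨j, _⟩ => isEmptyElim j
  rw [← card_eq_pow_finrank, ← card_univ, ← hcover]
  exact card_filter_eq_zero_or_exists_mem_span_singleton_le S.point_ne_zero

variable [Fintype κ]

theorem IsBlocking.succ_card_mul_pow_le_of_form (hV : finrank F V = d + 2) (hS : S.IsBlocking 1)
    (j₀ : κ) :
    (q + 1) * q ^ d ≤ Fintype.card κ * q ^ d + #{i | S.form j₀ (S.point i) ≠ 0} := by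
  have : Finite V := Module.finite_of_finite F
  have : Fintype V := Fintype.ofFinite V
  calc (q + 1) * q ^ d = q ^ (d + 1) + q ^ d := by ring
    _ ≤ ∑ x with S.form j₀ x = 1, S.mult x + q ^ d := by
        gcongr
        exact hS.pow_le_sum_mult hV (S.form_ne_zero j₀)
    _ ≤ _ := sum_mult_form_add_pow_le hV j₀

theorem IsBlocking.succ_card_mul_pow_le (hV : finrank F V = d + 2) (hS : S.IsBlocking 1) :
    (q + 1) * q ^ d ≤ Fintype.card κ * q ^ d + Fintype.card ι := by
  rcases isEmpty_or_nonempty κ with hκ | ⟨⟨j₀⟩⟩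
  · rw [Fintype.card_eq_zero (α := κ), zero_mul, zero_add]
    exact succ_mul_pow_le_of_pow_le Fintype.one_lt_card (hV ▸ hS.pow_finrank_le_of_isEmpty)
  · refine (hS.succ_card_mul_pow_le_of_form hV j₀).trans ?_
    gcongr
    exact card_le_univ _

theorem IsBlocking.succ_card_mul_pow_le_of_subspace {m : ℕ} (hS : S.IsBlocking (m + 1))
    {W : Submodule F V} (hWm : finrank F W = m + 2) (hW : ∀ j, ¬ W ≤ ker (S.form j)) :
    (q + 1) * q ^ m ≤ Fintype.card {i // S.point i ∈ W} * q ^ m + Fintype.card κ := by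
  have hdual := (hS.restrict hW).dual (n := 1) (by omega)
  refine (hdual.succ_card_mul_pow_le (Subspace.dual_finrank_eq.trans hWm)).trans ?_
  gcongr
  exact Fintype.card_subtype_le _

theorem IsBlocking.isExact (hV : finrank F V = d + 2) (hS : S.IsBlocking 1)
    (hcard : Fintype.card κ * q ^ d + Fintype.card ι ≤ (q + 1) * q ^ d) : S.IsExact where
  form_point_ne_zero j := by
    have hpoints : #{i | S.form j (S.point i) ≠ 0} = Fintype.card ι := by
      have := hS.succ_card_mul_pow_le_of_form hV j
      exact le_antisymm (card_le_univ _) (by omega)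
    simpa [filter_eq_self] using (card_eq_iff_eq_univ _).1 hpoints
  mult_eq_one j := by
    have : Finite V := Module.finite_of_finite F
    have : Fintype V := Fintype.ofFinite V
    have hle : ∀ x ∈ ({x | S.form j x = 1} : Finset V), 1 ≤ S.mult x := fun x hx =>
      hS.one_le_mult (by rintro rfl; simp at hx)
    have hone : ∀ x ∈ ({x | S.form j x = 1} : Finset V), 1 = S.mult x := by
      refine (sum_eq_sum_iff_of_le hle).1 ?_
      apply le_antisymm (sum_le_sum hle)
      have hslice := card_filter_dual_eq (n := d + 1) hV (S.form_ne_zero j) 1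
      have hsum := sum_mult_form_add_pow_le (S := S) hV j
      have hpoints := card_le_univ {i | S.form j (S.point i) ≠ 0}
      rw [← card_eq_sum_ones, hslice]
      linarith [pow_succ' q d]
    intro x hx
    rw [← S.mult_smul (inv_ne_zero hx)]
    exact (hone _ (by simp [hx])).symm

namespace IsExact

variable (hS : S.IsExact)
include hS

theorem card_filter_ker_form_ne_mul_add_card_point (hV : finrank F V = d + 2) (j₀ : κ) :
    #{j | ker (S.form j) ≠ ker (S.form j₀)} * q ^ d + Fintype.card ι = q ^ (d + 1) := by
  have : Finite V := Module.finite_of_finite F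
  have : Fintype V := Fintype.ofFinite V
  have hsum := sum_mult (S := S) hV (S.form_ne_zero j₀)
  have hone : ∑ x with S.form j₀ x = 1, S.mult x = q ^ (d + 1) := by
    rw [← card_filter_dual_eq (n := d + 1) hV (S.form_ne_zero j₀) 1, card_eq_sum_ones]
    exact sum_congr rfl fun x hx => hS.mult_eq_one j₀ x (by simp [(mem_filter.1 hx).2])
  rw [← hone, hsum, filter_true_of_mem fun i _ => hS.form_point_ne_zero j₀ i, card_univ]

theorem card_point_of_ker_form_eq [Nonempty κ] (hV : finrank F V = d + 2)
    (h : ∀ j j', ker (S.form j) = ker (S.form j')) : Fintype.card ι = q ^ (d + 1) := by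
  have hcount := hS.card_filter_ker_form_ne_mul_add_card_point hV (Classical.arbitrary κ)
  simpa [h _ (Classical.arbitrary κ)] using hcount

theorem card_form_mul_add_card_point_of_injective [Nonempty κ] (hV : finrank F V = d + 2)
    (h : Function.Injective fun j => ker (S.form j)) :
    Fintype.card κ * q ^ d + Fintype.card ι = (q + 1) * q ^ d := by
  have hcount := hS.card_filter_ker_form_ne_mul_add_card_point hV (Classical.arbitrary κ)
  simp only [h.ne_iff' rfl, filter_ne', card_erase_of_mem (mem_univ _), card_univ] at hcount
  rw [add_one_mul, ← pow_succ', ← hcount, add_right_comm, ← add_one_mul,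
    Nat.sub_one_add_one Fintype.card_ne_zero]

end IsExact
end Covering

section Centre

variable {F V ι κ : Type*} [Field F] [AddCommGroup V] [Module F V]
  {S : PointHyperplaneSystem F V ι κ} {N : ℕ} {U : Submodule F V}

theorem le_ker_quotient_form_iff {hU : ∀ i, S.point i ∉ U} {X : Submodule F (V ⧸ U)}
    {j : {j // U ≤ ker (S.form j)}} :
    X ≤ ker ((S.quotient U hU).form j) ↔ X.comap U.mkQ ≤ ker (S.form j) := by
  refine ⟨fun h v hv => h hv, fun h x hx => ?_⟩
  obtain ⟨v, rfl⟩ := U.mkQ_surjective x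
  exact h hx

variable [Fintype κ]

/-- A subspace without points that lies in at most `N` of the hyperplanes, so that projecting from
it keeps all the points and at most `N` hyperplanes. -/
structure IsCentre (S : PointHyperplaneSystem F V ι κ) (N : ℕ) (U : Submodule F V) : Prop where
  point_notMem : ∀ i, S.point i ∉ U
  card_form_le : Fintype.card {j // U ≤ ker (S.form j)} ≤ N

theorem IsCentre.comap {hU : ∀ i, S.point i ∉ U} {X : Submodule F (V ⧸ U)}
    (hX : (S.quotient U hU).IsCentre N X) : S.IsCentre N (X.comap U.mkQ) where
  point_notMem := hX.point_notMem
  card_form_le := by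
    refine le_of_eq_of_le (Fintype.card_congr ?_) hX.card_form_le
    simp only [le_ker_quotient_form_iff]
    exact (Equiv.subtypeSubtypeEquivSubtype fun h => (le_comap_mkQ U X).trans h).symm

theorem isCentre_span_singleton_iff {u : V} :
    S.IsCentre N (F ∙ u) ↔ (∀ i, S.point i ∉ F ∙ u) ∧ #{j | S.form j u = 0} ≤ N := by
  simp only [← Fintype.card_subtype, ← mem_ker, ← span_singleton_le_iff_mem u]
  exact ⟨fun h => ⟨h.1, h.2⟩, fun h => ⟨h.1, h.2⟩⟩

variable [Fintype F]

local notation "q" => Fintype.card F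

theorem exists_point_mem_notMem [Finite V] {Y Z : Submodule F V} (hκ : Fintype.card κ ≤ N * q)
    (hYZ : ¬ Y ≤ Z) (hY : ∀ j, ¬ Y ≤ ker (S.form j))
    (hcentre : ∀ u ∈ Y, u ≠ 0 → ¬ S.IsCentre N (F ∙ u)) : ∃ i, S.point i ∈ Y ∧ S.point i ∉ Z := by
  obtain ⟨v, hvY, hvZ, hv⟩ := exists_mem_notMem_card_mul_card_filter_le S.form hYZ hY
  have hle : #{j | S.form j v = 0} ≤ N := Nat.le_of_mul_le_mul_left
    (hv.trans (hκ.trans_eq (mul_comm N q))) Fintype.card_pos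
  have hv0 : v ≠ 0 := by
    rintro rfl
    exact hvZ Z.zero_mem
  obtain ⟨i, hi⟩ : ∃ i, S.point i ∈ F ∙ v := by
    by_contra! hno
    exact hcentre v hvY hv0 (isCentre_span_singleton_iff.2 ⟨hno, hle⟩)
  refine ⟨i, (span_singleton_le_iff_mem _ _).2 hvY hi, fun hiZ => hvZ ?_⟩
  exact (span_singleton_le_iff_mem _ _).2 hiZ
    (mem_span_singleton_symm_of_ne_zero (S.point_ne_zero i) hi)

theorem exists_isCentre_notMem [Finite V] {X : Submodule F V} (hκ : Fintype.card κ ≤ N * q)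
    (hX : X ≠ ⊤) (hXpoint : ∀ i, S.point i ∈ X) : ∃ v ∉ X, S.IsCentre N (F ∙ v) := by
  have htop : ∀ j, ¬ ⊤ ≤ ker (S.form j) := fun j hj =>
    S.form_ne_zero j (LinearMap.ker_eq_top.1 (top_le_iff.1 hj))
  obtain ⟨v, -, hvX, hv⟩ :=
    exists_mem_notMem_card_mul_card_filter_le S.form (mt top_le_iff.1 hX) htop
  refine ⟨v, hvX, isCentre_span_singleton_iff.2 ⟨fun i hi => hvX ?_, ?_⟩⟩
  · exact (span_singleton_le_iff_mem _ _).2 (hXpoint i)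
      (mem_span_singleton_symm_of_ne_zero (S.point_ne_zero i) hi)
  · exact Nat.le_of_mul_le_mul_left (hv.trans (hκ.trans_eq (mul_comm N q))) Fintype.card_pos

variable [FiniteDimensional F V] [Fintype ι]

theorem exists_isCentre_span_singleton {k d a a' : ℕ} (hV : finrank F V = k + d + 3)
    (ha : a + a' = q + 2) (hι : Fintype.card ι < a' * q ^ d)
    (hκ : Fintype.card κ ≤ a * q ^ (k + 1)) : ∃ u ≠ 0, S.IsCentre (a * q ^ k) (F ∙ u) := by
  have : Finite V := Module.finite_of_finite F
  have : Fintype V := Fintype.ofFinite V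
  let bad : Finset V := {u | u = 0 ∨ ∃ i, S.point i ∈ F ∙ u}
  suffices h : ∃ u, u ∉ bad ∧ #{j | S.form j u = 0} ≤ a * q ^ k by
    obtain ⟨u, hu, hle⟩ := h
    simp only [bad, mem_filter_univ, not_or, not_exists] at hu
    exact ⟨u, hu.1, isCentre_span_singleton_iff.2 ⟨hu.2, hle⟩⟩
  by_contra! hmany
  have hbad : #bad * (a * q ^ k + 1) < q ^ (k + d + 3) := by
    refine lt_of_le_of_lt ?_ (mul_succ_mul_pow_lt Fintype.one_lt_card ha hι)
    gcongr
    exact card_filter_eq_zero_or_exists_mem_span_singleton_le S.point_ne_zero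
  have hcount : q ^ (k + d + 3) * (a * q ^ k + 1) ≤
      Fintype.card κ * q ^ (k + d + 2) + #bad * (a * q ^ k + 1) :=
    calc q ^ (k + d + 3) * (a * q ^ k + 1) = ∑ _u : V, (a * q ^ k + 1) := by
          rw [sum_const, card_univ, card_eq_pow_finrank (K := F) (V := V), hV, smul_eq_mul]
      _ ≤ ∑ u : V, (#{j | S.form j u = 0} + if u ∈ bad then a * q ^ k + 1 else 0) := by
          refine sum_le_sum fun u _ => ?_
          split_ifs with hu
          · exact le_add_self
          · exact hmany u hu
      _ = _ := by
          rw [sum_add_distrib, sum_card_filter_dual_eq_zero hV S.form_ne_zero, ← sum_filter,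
            filter_mem_eq_inter, univ_inter, sum_const, smul_eq_mul]
  have hforms : Fintype.card κ * q ^ (k + d + 2) ≤ q ^ (k + d + 3) * (a * q ^ k) :=
    calc Fintype.card κ * q ^ (k + d + 2) ≤ a * q ^ (k + 1) * q ^ (k + d + 2) := by gcongr
      _ = q ^ (k + d + 3) * (a * q ^ k) := by ring
  linarith

end Centre

section ExistsCentre

variable {F ι : Type*} [Field F] [Fintype F] [Fintype ι]

local notation "q" => Fintype.card F

theorem exists_isCentre {d a a' : ℕ} (ha : a + a' = q + 2) (hι : Fintype.card ι < a' * q ^ d)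
    (k : ℕ) {V κ : Type*} [AddCommGroup V] [Module F V] [FiniteDimensional F V] [Fintype κ]
    (S : PointHyperplaneSystem F V ι κ) (hV : finrank F V = k + d + 2)
    (hκ : Fintype.card κ ≤ a * q ^ k) :
    ∃ U : Submodule F V, finrank F U = k ∧ S.IsCentre a U := by
  induction k generalizing V κ with
  | zero =>
    refine ⟨⊥, finrank_bot F V, fun i => by simpa using S.point_ne_zero i, ?_⟩
    exact (Fintype.card_subtype_le _).trans (by simpa using hκ)
  | succ k ih =>
    obtain ⟨u, hu0, hu⟩ := S.exists_isCentre_span_singleton (by omega) ha hι hκ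
    have hu1 := finrank_span_singleton (K := F) hu0
    have hquot := finrank_quotient_add_finrank (F ∙ u)
    obtain ⟨U, hUk, hU⟩ := ih (S.quotient (F ∙ u) hu.point_notMem) (by omega) hu.card_form_le
    exact ⟨U.comap (F ∙ u).mkQ, by rw [finrank_comap_mkQ, hUk, hu1], hU.comap⟩

end ExistsCentre

section Integrality

variable {F V ι κ : Type*} [Field F] [Fintype F] [AddCommGroup V] [Module F V]
  [FiniteDimensional F V] [Fintype ι] [Fintype κ] {S : PointHyperplaneSystem F V ι κ}

local notation "q" => Fintype.card F

namespace IsBlocking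

theorem mul_pow_le_card_point {m n a a' : ℕ} (hS : S.IsBlocking (m + 1))
    (hκ : Fintype.card κ < a * q ^ m) (ha : a + a' = q + 2) {U : Submodule F V}
    (hU : ∀ i, S.point i ∉ U) (hUm : finrank F U = m + 1) (hV : finrank F V = m + n + 2)
    {g : Dual F V} (hg : g ≠ 0) (hUg : U ≤ ker g)
    (hforms : ∀ j, U ≤ ker (S.form j) → ker (S.form j) ≤ ker g) :
    a' * q ^ n ≤ Fintype.card ι := by
  have : Finite (V ⧸ U) := Module.finite_of_finite F
  have : Fintype (V ⧸ U) := Fintype.ofFinite _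
  let p := (S.quotient U hU).point
  let g' : Dual F (V ⧸ U) := U.liftQ g hUg
  have hg' : g' ≠ 0 := fun h =>
    hg (by rw [← U.liftQ_mkQ g hUg, show U.liftQ g hUg = 0 from h, LinearMap.zero_comp])
  have hline : ∀ x ∈ ({x | g' x = 1} : Finset _), a' ≤ #{i | p i ∈ F ∙ x} := by
    intro x hx
    have hgx : g' x = 1 := by simpa using hx
    have hx0 : x ≠ 0 := by rintro rfl; simp at hgx
    have hbound := hS.succ_card_mul_pow_le_of_subspace (W := (F ∙ x).comap U.mkQ)
      (by rw [finrank_comap_mkQ, finrank_span_singleton hx0, hUm, add_comm]) fun j hj => by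
        obtain ⟨v, rfl⟩ := U.mkQ_surjective x
        have hgv : g v = 0 := hforms j ((le_comap_mkQ U _).trans hj)
          (hj (mem_span_singleton_self (U.mkQ v)))
        exact one_ne_zero (hgx.symm.trans hgv)
    rw [Fintype.card_subtype] at hbound
    change a' ≤ #{i | S.point i ∈ (F ∙ x).comap U.mkQ}
    by_contra! hlt
    have hsum : (a + a') * q ^ m = (q + 2) * q ^ m := by rw [ha]
    linarith [Nat.mul_le_mul_right (q ^ m) (Nat.succ_le_of_lt hlt)]
  have hquot : finrank F (V ⧸ U) = n + 1 := by
    have := finrank_quotient_add_finrank U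
    omega
  calc a' * q ^ n = ∑ x with g' x = 1, a' := by
        rw [sum_const, card_filter_dual_eq hquot hg', smul_eq_mul, mul_comm]
    _ ≤ ∑ x with g' x = 1, #{i | p i ∈ F ∙ x} := sum_le_sum hline
    _ = #{i | g' (p i) ≠ 0} := by
        simp only [sum_card_filter_eq_sum_card_filter_and, p,
          card_filter_mem_span_singleton g' ((S.quotient U hU).point_ne_zero _)]
        simp [sum_ite]
    _ ≤ Fintype.card ι := card_le_univ _

theorem le_card_of_restrict_ker {d : ℕ} (hV : finrank F V = d + 3) (hS : S.IsBlocking 1) {j₀ : κ}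
    (hj₀ : (S.restrict (ker (S.form j₀))).IsBlocking 1) :
    (q + 2) * (q ^ (d + 1) + q ^ d) ≤
      Fintype.card κ * (q ^ (d + 1) + q ^ d) + Fintype.card ι + q ^ (d + 1) := by
  have hker := Dual.finrank_ker_add_one_of_ne_zero (S.form_ne_zero j₀)
  have hform := hS.succ_card_mul_pow_le_of_form hV j₀
  have hrestrict := hj₀.succ_card_mul_pow_le (d := d) (by omega)
  have hforms : Fintype.card {j // ¬ ker (S.form j₀) ≤ ker (S.form j)} + 1 ≤ Fintype.card κ :=
    Fintype.card_subtype_lt (x := j₀) (by simp)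
  have hpoints : Fintype.card {i // S.point i ∈ ker (S.form j₀)} +
      #{i | S.form j₀ (S.point i) ≠ 0} = Fintype.card ι := by
    rw [Fintype.card_subtype]
    exact card_filter_add_card_filter_not _
  nlinarith [Nat.mul_le_mul_right (q ^ d) hforms]

theorem mul_pow_add_mul_pow_le {k a a' : ℕ} (hV : finrank F V = 2 * k + 4)
    (hS : S.IsBlocking (k + 2)) (ha : a + a' = q + 2) (ha0 : 1 ≤ a)
    (hι : Fintype.card ι < a' * q ^ (k + 1)) (hκ : Fintype.card κ < a * q ^ (k + 1)) :
    a' * q ^ (k + 1) + a' * q ^ k ≤ Fintype.card ι + q ^ (k + 1) := by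
  obtain ⟨U, hUk, hU⟩ := exists_isCentre ha hι (k + 1) S (by omega) hκ.le
  have hquot := finrank_quotient_add_finrank U
  have hT : (S.quotient U hU.point_notMem).IsBlocking 1 :=
    IsBlocking.quotient (by rwa [add_comm]) _ hUk
  have hforms := Nat.mul_le_mul_right (q ^ (k + 1) + q ^ k) hU.card_form_le
  obtain ⟨j₀⟩ : Nonempty {j // U ≤ ker (S.form j)} := by
    by_contra hempty
    rw [not_nonempty_iff] at hempty
    have hbound := hT.succ_card_mul_pow_le (d := k + 1) (by omega)
    rw [Fintype.card_eq_zero (α := {j // U ≤ ker (S.form j)}), zero_mul, zero_add] at hbound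
    exact absurd (lt_of_mul_lt_mul_right (hbound.trans_lt hι) (Nat.zero_le _)) (by omega)
  set T := S.quotient U hU.point_notMem
  by_cases hj₀ : (T.restrict (ker (T.form j₀))).IsBlocking 1
  · have hbound := hT.le_card_of_restrict_ker (d := k) (by omega) hj₀
    rw [← ha] at hbound
    linarith
  · rw [isBlocking_restrict_iff] at hj₀
    push Not at hj₀
    obtain ⟨X, hX, hX1, hXpoint, hXform⟩ := hj₀
    have hbound := hS.mul_pow_le_card_point (n := k + 1) hκ ha (U := X.comap U.mkQ) hXpoint
      (by rw [finrank_comap_mkQ, hX1, hUk, add_comm]) (by omega) (S.form_ne_zero j₀)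
      (le_ker_quotient_form_iff.1 hX) fun j hj => by
        by_contra hne
        obtain ⟨hUj⟩ : Nonempty (U ≤ ker (S.form j)) := ⟨(le_comap_mkQ U X).trans hj⟩
        refine hXform ⟨j, hUj⟩ (fun hle => hne ?_) (le_ker_quotient_form_iff.2 hj)
        exact (ker_eq_ker_of_le (S.form_ne_zero j₀) (S.form_ne_zero j)
          (le_ker_quotient_form_iff.1 hle)).ge
    omega

theorem exists_card_eq_mul_pow {k : ℕ} (hV : finrank F V = 2 * k + 4) (hS : S.IsBlocking (k + 2))
    (hcard : Fintype.card ι + Fintype.card κ = (q + 1) * q ^ (k + 1)) :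
    ∃ α β, α + β = q + 1 ∧ Fintype.card κ = α * q ^ (k + 1) ∧
      Fintype.card ι = β * q ^ (k + 1) := by
  have hpos : 0 < q ^ (k + 1) := by positivity
  obtain ⟨α, r, hr, hκ⟩ : ∃ α r, r < q ^ (k + 1) ∧ Fintype.card κ = α * q ^ (k + 1) + r :=
    ⟨_, _, Nat.mod_lt _ hpos, (Nat.div_add_mod' _ _).symm⟩
  obtain ⟨β, hβ⟩ : ∃ β, α + β = q + 1 := by
    obtain ⟨β, hβ⟩ := Nat.exists_eq_add_of_le
      (Nat.le_of_mul_le_mul_right (show α * q ^ (k + 1) ≤ (q + 1) * q ^ (k + 1) by omega) hpos)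
    exact ⟨β, hβ.symm⟩
  have hsum : α * q ^ (k + 1) + β * q ^ (k + 1) = (q + 1) * q ^ (k + 1) := by rw [← add_mul, hβ]
  obtain rfl | hr0 := Nat.eq_zero_or_pos r
  · exact ⟨α, β, hβ, hκ, by omega⟩
  · exfalso
    have hα : α < q + 1 := lt_of_mul_lt_mul_right (a := q ^ (k + 1)) (by omega) hpos.le
    have hpoint := hS.mul_pow_add_mul_pow_le (a := α + 1) (a' := β) hV (by omega) (by omega)
      (by omega) (by linarith)
    have hform := (hS.dual (n := k + 2) (by omega)).mul_pow_add_mul_pow_le (a := β) (a' := α + 1)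
      (Subspace.dual_finrank_eq.trans hV) (by omega) (by omega) (by linarith) (by omega)
    nlinarith [pow_succ q k, Nat.pos_of_ne_zero (pow_ne_zero k (Fintype.card_ne_zero (α := F)))]

end IsBlocking
end Integrality

section Extremal

variable {F V ι κ : Type*} [Field F] [Fintype F] [AddCommGroup V] [Module F V]
  [Fintype ι] [Fintype κ] {S : PointHyperplaneSystem F V ι κ} {k d α β : ℕ}

local notation "q" => Fintype.card F

/-- A blocking system with at most `β q ^ d` points and `α q ^ k` hyperplanes, where
`α + β = q + 1`. The dimension of the ambient space is chosen so that projecting from a centre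
turns `k` into smaller values and leaves `d`, `α` and `β` unchanged. -/
structure IsExtremal (S : PointHyperplaneSystem F V ι κ) (k d α β : ℕ) : Prop where
  finrank_eq : finrank F V = k + d + 2
  isBlocking : S.IsBlocking (k + 1)
  add_eq : α + β = q + 1
  left_pos : 0 < α
  card_point_le : Fintype.card ι ≤ β * q ^ d
  card_form_le : Fintype.card κ ≤ α * q ^ k

namespace IsExtremal

theorem card_point_lt (hS : S.IsExtremal k d α β) : Fintype.card ι < (β + 1) * q ^ d := by
  have hpos : 0 < q ^ d := by positivity
  linarith [hS.card_point_le]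

variable [FiniteDimensional F V]

theorem quotient {k' N : ℕ} {U : Submodule F V} (hS : S.IsExtremal k d α β) (hU : S.IsCentre N U)
    (hN : N ≤ α * q ^ k') (hk : k' + finrank F U = k) :
    (S.quotient U hU.point_notMem).IsExtremal k' d α β where
  finrank_eq := by
    have := finrank_quotient_add_finrank U
    have := hS.finrank_eq
    omega
  isBlocking := IsBlocking.quotient (by rw [add_right_comm, hk]; exact hS.isBlocking) _ rfl
  add_eq := hS.add_eq
  left_pos := hS.left_pos
  card_point_le := hS.card_point_le
  card_form_le := hU.card_form_le.trans hN

theorem exists_isCentre_span_singleton (hS : S.IsExtremal (k + 1) d α β) :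
    ∃ u ≠ 0, S.IsCentre (α * q ^ k) (F ∙ u) :=
  S.exists_isCentre_span_singleton (a' := β + 1) (by linarith [hS.finrank_eq])
    (by linarith [hS.add_eq]) hS.card_point_lt hS.card_form_le

theorem exists_isCentre (hS : S.IsExtremal k d α β) :
    ∃ U : Submodule F V, finrank F U = k ∧ S.IsCentre α U :=
  PointHyperplaneSystem.exists_isCentre (a' := β + 1) (by linarith [hS.add_eq]) hS.card_point_lt k S
    hS.finrank_eq hS.card_form_le

theorem quotient_of_finrank_eq {U : Submodule F V} (hS : S.IsExtremal k d α β)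
    (hU : S.IsCentre α U) (hUk : finrank F U = k) :
    (S.quotient U hU.point_notMem).IsExtremal 0 d α β :=
  hS.quotient hU (by simp) (by omega)

theorem isExact (hS : S.IsExtremal 0 d α β) : S.IsExact := by
  refine hS.isBlocking.isExact (d := d) (hS.finrank_eq.trans (by omega)) ?_
  have hform := Nat.mul_le_mul_right (q ^ d) hS.card_form_le
  rw [pow_zero, mul_one] at hform
  rw [← hS.add_eq]
  linarith [hS.card_point_le]

theorem card_form_and_card_point (hS : S.IsExtremal 0 d α β) :
    Fintype.card κ = α ∧ Fintype.card ι = β * q ^ d := by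
  have hbound := hS.isBlocking.succ_card_mul_pow_le (d := d) (hS.finrank_eq.trans (by omega))
  have hpoint := hS.card_point_le
  have hform : Fintype.card κ ≤ α := by simpa using hS.card_form_le
  have hmul := Nat.mul_le_mul_right (q ^ d) hform
  rw [← hS.add_eq, add_mul] at hbound
  exact ⟨hform.antisymm (Nat.le_of_mul_le_mul_right (c := q ^ d) (by omega) (by positivity)),
    by omega⟩

theorem card_form (hS : S.IsExtremal 0 d α β) : Fintype.card κ = α :=
  hS.card_form_and_card_point.1

theorem nonempty_form (hS : S.IsExtremal 0 d α β) : Nonempty κ :=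
  Fintype.card_pos_iff.1 (hS.card_form.symm ▸ hS.left_pos)

theorem card_point (hS : S.IsExtremal k d α β) : Fintype.card ι = β * q ^ d := by
  obtain ⟨U, hUk, hU⟩ := hS.exists_isCentre
  exact (hS.quotient_of_finrank_eq hU hUk).card_form_and_card_point.2

theorem point_notMem_span_singleton (hS : S.IsExtremal k d α β) {i i' : ι} (hi : i ≠ i') :
    S.point i' ∉ F ∙ S.point i := by
  obtain ⟨U, hUk, hU⟩ := hS.exists_isCentre
  have hT := hS.quotient_of_finrank_eq hU hUk
  have := hT.nonempty_form
  intro hmem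
  apply hT.isExact.point_notMem_span_singleton hi
  obtain ⟨c, hc⟩ := mem_span_singleton.1 hmem
  exact mem_span_singleton.2 ⟨c, (U.mkQ.map_smul c _).symm.trans (congrArg U.mkQ hc)⟩

theorem card_point_mem {e : ℕ} {W : Submodule F V} (hS : S.IsExtremal 0 d α β)
    (hWe : finrank F W = e + 2) (hW : ∀ j, ¬ W ≤ ker (S.form j)) :
    Fintype.card {i // S.point i ∈ W} = β * q ^ e ∨
      Fintype.card {i // S.point i ∈ W} = q ^ (e + 1) ∧
        ∀ j j', ∀ x ∈ W, S.form j x = 0 → S.form j' x = 0 := by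
  have hR := hS.isExact.restrict hW
  have hforms : Fintype.card {j // ¬ W ≤ ker (S.form j)} = α := by
    rw [Fintype.card_subtype, filter_true_of_mem fun j _ => hW j, card_univ, hS.card_form]
  have : Nonempty {j // ¬ W ≤ ker (S.form j)} :=
    Fintype.card_pos_iff.1 (hforms.symm ▸ hS.left_pos)
  rcases hR.ker_form_eq_or_injective with hker | hker
  · refine Or.inr ⟨hR.card_point_of_ker_form_eq hWe hker, fun j j' x hx hjx => ?_⟩
    exact (hker ⟨j, hW j⟩ ⟨j', hW j'⟩).le (x := ⟨x, hx⟩) hjx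
  · have hcount := hR.card_form_mul_add_card_point_of_injective hWe hker
    rw [hforms, ← hS.add_eq, add_mul] at hcount
    exact Or.inl (Nat.add_left_cancel hcount)

theorem injective_ker_form (hS : S.IsExtremal 0 d α β) (hα : α ≠ 1) :
    Function.Injective fun j => ker (S.form j) := by
  refine hS.isExact.ker_form_eq_or_injective.resolve_left fun hker => hα ?_
  have := hS.nonempty_form
  have hcard := hS.isExact.card_point_of_ker_form_eq (d := d) (hS.finrank_eq.trans (by omega)) hker
  rw [hS.card_point, pow_succ'] at hcard
  have hβ : β = q := Nat.eq_of_mul_eq_mul_right (pow_pos Fintype.card_pos d) hcard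
  have := hS.add_eq
  omega

end IsExtremal
end Extremal

section Separation

variable {F V ι κ : Type*} [Field F] [AddCommGroup V] [Module F V]

/-- For points off the hyperplanes: some two hyperplanes meet the line joining the points in
different points. -/
def Separates (S : PointHyperplaneSystem F V ι κ) (i i' : ι) : Prop :=
  ∃ j j', S.form j (S.point i) * S.form j' (S.point i') ≠
    S.form j' (S.point i) * S.form j (S.point i')

theorem Separates.or_separates {S : PointHyperplaneSystem F V ι κ} {i i' z : ι}
    (hz : S.Separates i z) (hform : ∀ j, S.form j (S.point i') ≠ 0) :
    S.Separates i i' ∨ S.Separates z i' := by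
  obtain ⟨j, j', hjj'⟩ := hz
  by_contra! hno
  simp only [Separates, not_exists, not_not] at hno
  refine hjj' (mul_right_cancel₀ (hform j) ?_)
  linear_combination S.form j (S.point z) * hno.1 j j' - S.form j (S.point i) * hno.2 j j'

end Separation

section Secant

variable {F V ι κ : Type*} [Field F] [Fintype F] [AddCommGroup V] [Module F V]
  [FiniteDimensional F V] [Fintype ι] [Fintype κ] {S : PointHyperplaneSystem F V ι κ}
  {k d α β : ℕ} {i i' : ι}

local notation "q" => Fintype.card F

namespace IsExtremal

theorem card_point_mem_span_pair (hS : S.IsExtremal 0 d α β) (hi : i ≠ i')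
    (hsep : α = 1 ∨ S.Separates i i') :
    Fintype.card {z // S.point z ∈ span F {S.point i, S.point i'}} = β := by
  have hW : ∀ j, ¬ span F {S.point i, S.point i'} ≤ ker (S.form j) := fun j hj =>
    hS.isExact.form_point_ne_zero j i (hj (subset_span (by simp)))
  have hcard := hS.card_point_mem (e := 0) (finrank_span_pair_of_notMem (S.point_ne_zero i)
    (hS.point_notMem_span_singleton hi)) hW
  rw [zero_add, pow_zero, pow_one, mul_one] at hcard
  rcases hcard with hcard | ⟨hcard, hforms⟩
  · exact hcard
  · rcases hsep with rfl | ⟨j, j', hjj'⟩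
    · have := hS.add_eq
      omega
    · refine absurd ?_ hjj'
      have hj' := hforms j j'
        (S.form j (S.point i') • S.point i - S.form j (S.point i) • S.point i')
        (sub_mem (smul_mem _ _ (subset_span (by simp))) (smul_mem _ _ (subset_span (by simp))))
        (by simp [mul_comm])
      simp only [map_sub, map_smul, smul_eq_mul] at hj'
      linear_combination -hj'

theorem exists_dual_of_not_separates (hS : S.IsExtremal 0 d α β) (hα : α ≠ 1)
    (hsep : ∀ i', ¬ S.Separates i i') : ∃ χ : Dual F V, χ ≠ 0 ∧ ∀ i', χ (S.point i') = 0 := by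
  have hκ : 1 < Fintype.card κ := by
    have := hS.left_pos
    have := hS.card_form
    omega
  obtain ⟨j, j', hjj'⟩ := Fintype.one_lt_card_iff.1 hκ
  simp only [Separates, not_exists, not_not] at hsep
  refine ⟨S.form j (S.point i) • S.form j' - S.form j' (S.point i) • S.form j, fun h => ?_,
    fun i' => by simp [hsep i' j j']⟩
  refine hjj' (hS.injective_ker_form hα ?_)
  have hne := hS.isExact.form_point_ne_zero
  have hker := congrArg ker (sub_eq_zero.1 h)
  rw [LinearMap.ker_smul _ _ (hne j i), LinearMap.ker_smul _ _ (hne j' i)] at hker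
  exact hker.symm

theorem isExact_dual_restrict {W : Submodule F V} (hS : S.IsExtremal k d α β)
    (hWk : finrank F W = k + 2) (hW : ∀ j, ¬ W ≤ ker (S.form j))
    (hcard : Fintype.card {i // S.point i ∈ W} ≤ β) : (S.restrict W).dual.IsExact := by
  refine ((hS.isBlocking.restrict hW).dual (n := 1) (by omega)).isExact (d := k)
    (Subspace.dual_finrank_eq.trans hWk) ?_
  rw [← hS.add_eq, add_comm α β, add_mul]
  gcongr
  exact (Fintype.card_subtype_le _).trans hS.card_form_le

variable {U : Submodule F V} (hS : S.IsExtremal k d α β) (hU : S.IsCentre α U)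
  (hUk : finrank F U = k)
include hS hU hUk

theorem not_comap_span_pair_le_ker_form (i i' : ι) (j : κ) :
    ¬ (span F {U.mkQ (S.point i), U.mkQ (S.point i')}).comap U.mkQ ≤ ker (S.form j) := fun hj =>
  (hS.quotient_of_finrank_eq hU hUk).isExact.form_point_ne_zero
    ⟨j, (le_comap_mkQ U _).trans hj⟩ i (hj (subset_span (by simp)))

variable (hi : i ≠ i') (hsep : α = 1 ∨ (S.quotient U hU.point_notMem).Separates i i')
include hi hsep

theorem isExact_dual_restrict_comap_span_pair :
    (S.restrict ((span F {U.mkQ (S.point i), U.mkQ (S.point i')}).comap U.mkQ)).dual.IsExact := by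
  have hT := hS.quotient_of_finrank_eq hU hUk
  refine hS.isExact_dual_restrict ?_ (hS.not_comap_span_pair_le_ker_form hU hUk i i')
    (hT.card_point_mem_span_pair hi hsep).le
  rw [finrank_comap_mkQ, hUk, add_comm]
  exact congrArg (k + ·) (finrank_span_pair_of_notMem
    ((S.quotient U hU.point_notMem).point_ne_zero i) (hT.point_notMem_span_singleton hi))

theorem two_le : 2 ≤ β := by
  rw [← (hS.quotient_of_finrank_eq hU hUk).card_point_mem_span_pair hi hsep]
  exact Fintype.one_lt_card_iff.2 ⟨⟨i, subset_span (by simp)⟩, ⟨i', subset_span (by simp)⟩,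
    by simpa using hi⟩

theorem form_point_ne_zero (j : κ) : S.form j (S.point i) ≠ 0 :=
  (hS.isExact_dual_restrict_comap_span_pair hU hUk hi hsep).form_point_ne_zero
    ⟨i, subset_span (by simp)⟩ ⟨j, hS.not_comap_span_pair_le_ker_form hU hUk i i' j⟩

theorem apply_point_eq_zero {ψ : Dual F V} {z : ι} (hz : z ≠ i)
    (hzmem : U.mkQ (S.point z) ∈ span F {U.mkQ (S.point i), U.mkQ (S.point i')})
    (hψi : ψ (S.point i) = 0) (hψz : ψ (S.point z) = 0) : ψ (S.point i') = 0 :=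
  (hS.isExact_dual_restrict_comap_span_pair hU hUk hi hsep).form_apply_eq_zero
    (j₁ := ⟨i, subset_span (by simp)⟩) (j₂ := ⟨z, hzmem⟩)
    (fun h => hz (congrArg Subtype.val h).symm)
    (x := ψ.domRestrict _) hψi hψz ⟨i', subset_span (by simp)⟩

end IsExtremal
end Secant

section DualSum

variable {F V ι κ : Type*} [Field F] [Fintype F] [AddCommGroup V] [Module F V]
  [Fintype (Dual F V)] [Fintype ι] [Fintype κ] {S : PointHyperplaneSystem F V ι κ}

local notation "q" => Fintype.card F

theorem sum_card_filter_apply_point_eq_zero_sub_mul_sub_le {a b : ℤ} (hab : 0 ≤ a * b)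
    (hforms : ∀ j i, S.form j (S.point i) ≠ 0)
    (hgood : ∀ ψ : Dual F V, ψ ≠ 0 → (∀ j, ¬ ker ψ ≤ ker (S.form j)) →
      (#{i | ψ (S.point i) = 0} : ℤ) = a ∨ (#{i | ψ (S.point i) = 0} : ℤ) = b) :
    ∑ ψ : Dual F V, ((#{i | ψ (S.point i) = 0} : ℤ) - a) * (#{i | ψ (S.point i) = 0} - b) ≤
      (Fintype.card ι - a) * (Fintype.card ι - b) + Fintype.card κ * (q - 1) * (a * b) := by
  let count (ψ : Dual F V) : ℤ := (#{i | ψ (S.point i) = 0} : ℕ)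
  let bad : Finset (Dual F V) := {ψ | ψ = 0 ∨ ∃ j, S.form j ∈ F ∙ ψ}
  have hzero : ∀ ψ ∉ bad, (count ψ - a) * (count ψ - b) = 0 := by
    intro ψ hψ
    simp only [bad, mem_filter_univ, not_or, not_exists] at hψ
    refine mul_eq_zero.2 ((hgood ψ hψ.1 fun j hj => hψ.2 j ?_).imp sub_eq_zero.2 sub_eq_zero.2)
    simpa using mem_span_of_iInf_ker_le_ker (L := fun _ : Unit => ψ) (by simpa using hj)
  have hproportional : ∀ ψ ∈ bad.erase 0, (count ψ - a) * (count ψ - b) = a * b := by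
    intro ψ hψ
    simp only [bad, mem_erase, mem_filter_univ] at hψ
    obtain ⟨j, hj⟩ := hψ.2.resolve_left hψ.1
    obtain ⟨c, hc⟩ := mem_span_singleton.1 hj
    have hcount : #{i | ψ (S.point i) = 0} = 0 := card_filter_eq_zero_iff.2 fun i _ hi =>
      hforms j i (by rw [← hc, LinearMap.smul_apply, hi, smul_zero])
    simp only [count, hcount]
    ring
  have h0 : (0 : Dual F V) ∈ bad := by simp [bad]
  have hbad : (#(bad.erase 0) : ℤ) ≤ Fintype.card κ * (q - 1) := by
    have hle : #bad ≤ Fintype.card κ * (q - 1) + 1 :=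
      card_filter_eq_zero_or_exists_mem_span_singleton_le S.form_ne_zero
    rw [← Nat.cast_pred Fintype.card_pos, card_erase_of_mem h0]
    exact_mod_cast Nat.sub_le_of_le_add hle
  calc ∑ ψ, (count ψ - a) * (count ψ - b)
      = (count 0 - a) * (count 0 - b) + #(bad.erase 0) * (a * b) := by
        rw [← sum_subset (subset_univ bad) fun ψ _ => hzero ψ, ← add_sum_erase bad _ h0,
          sum_congr rfl hproportional, sum_const, nsmul_eq_mul]
    _ ≤ (count 0 - a) * (count 0 - b) + Fintype.card κ * (q - 1) * (a * b) := by gcongr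
    _ = _ := by simp [count]

end DualSum

section SecondMoment

variable {F V ι κ : Type*} [Field F] [Fintype F] [AddCommGroup V] [Module F V]
  [FiniteDimensional F V] [Fintype ι] [Fintype κ] {S : PointHyperplaneSystem F V ι κ}
  {k l d α β : ℕ} {i i' : ι}

local notation "q" => Fintype.card F

namespace IsExtremal

theorem card_filter_apply_point_eq_zero {U : Submodule F V} {ψ : Dual F V}
    (hS : S.IsExtremal k (l + 1) α β) (hU : S.IsCentre α U) (hUk : finrank F U = k) (hψ : ψ ≠ 0)
    (hUψ : U ≤ ker ψ) (hforms : ∀ j, ¬ ker ψ ≤ ker (S.form j)) :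
    #{i | ψ (S.point i) = 0} = β * q ^ l ∨ #{i | ψ (S.point i) = 0} = q * q ^ l := by
  have hT := hS.quotient_of_finrank_eq hU hUk
  have hψU : U.liftQ ψ hUψ ≠ 0 := fun h => hψ (by rw [← U.liftQ_mkQ ψ hUψ, h, LinearMap.zero_comp])
  have hker := Dual.finrank_ker_add_one_of_ne_zero hψU
  have hquot := hT.finrank_eq
  have hcard := hT.card_point_mem (e := l) (W := ker (U.liftQ ψ hUψ)) (by omega) fun j hj =>
    hforms j (le_ker_quotient_form_iff.1 hj)
  rw [Fintype.card_subtype, pow_succ'] at hcard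
  exact hcard.imp_right And.left

theorem injective_ker_dual_form (hS : S.IsExtremal k d α β) :
    Function.Injective fun i => ker (S.dual.form i) := by
  intro i i' hker
  by_contra hi
  obtain ⟨χ, hχ, hχi⟩ := exists_le_ker_of_notMem (hS.point_notMem_span_singleton hi)
  refine hχ ?_
  have hmem : χ ∈ ker (S.dual.form i) := hχi (mem_span_singleton_self _)
  exact hker.le hmem

/-- If every hyperplane outside the system passed through a centre, then
`(c - β * q ^ l) * (c - q ^ (l + 1))`, with `c` the number of points on a hyperplane, would vanish
outside the system, and its sum over all the hyperplanes would be too small. -/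
theorem exists_dual_forall_isCentre_apply_ne_zero (hS : S.IsExtremal 1 (l + 1) α β) (hβ : 2 ≤ β)
    (hforms : ∀ j i, S.form j (S.point i) ≠ 0) :
    ∃ ψ : Dual F V, ψ ≠ 0 ∧ (∀ j, ¬ ker ψ ≤ ker (S.form j)) ∧
      ∀ u ≠ 0, S.IsCentre α (F ∙ u) → ψ u ≠ 0 := by
  by_contra! hno
  have : Finite (Dual F V) := Module.finite_of_finite F
  have : Fintype (Dual F V) := Fintype.ofFinite _
  have hle := S.sum_card_filter_apply_point_eq_zero_sub_mul_sub_le (a := β * q ^ l)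
    (b := q * q ^ l) (by positivity) hforms fun ψ hψ hker => by
      obtain ⟨u, hu0, hu, hψu⟩ := hno ψ hψ hker
      exact_mod_cast hS.card_filter_apply_point_eq_zero hu (finrank_span_singleton hu0) hψ
        ((span_singleton_le_iff_mem _ _).2 hψu) hker
  have hmoment := sum_card_filter_dual_eq_zero_sub_mul_sub (n := l + 2)
    (Subspace.dual_finrank_eq.trans (hS.finrank_eq.trans (by omega))) S.dual.form_ne_zero
    hS.injective_ker_dual_form (β * q ^ l) (q * q ^ l)
  have hq : (2 : ℤ) ≤ q := by exact_mod_cast Fintype.one_lt_card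
  have hκ : (Fintype.card κ : ℤ) ≤ α * q := by exact_mod_cast pow_one q ▸ hS.card_form_le
  have hlt := sub_mul_sub_add_lt (α := α) (β := β) (N := q ^ l) hq (by exact_mod_cast hβ)
    (by positivity) (by exact_mod_cast hS.add_eq)
    (mul_le_mul_of_nonneg_right hκ (by linarith : (0 : ℤ) ≤ q - 1))
  have hcard : (Fintype.card ι : ℤ) = β * (q ^ l * q) := by exact_mod_cast hS.card_point
  rw [← hcard] at hlt
  refine (hle.trans_lt hlt).ne (hmoment.trans ?_)
  ring

end IsExtremal
end SecondMoment

section Span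

variable {F V ι κ : Type*} [Field F] [Fintype F] [AddCommGroup V] [Module F V]
  [FiniteDimensional F V] [Fintype ι] [Fintype κ] {S : PointHyperplaneSystem F V ι κ}
  {k l d α β : ℕ} {i i' : ι}

local notation "q" => Fintype.card F

namespace IsExtremal

/-- Moving `point i'` along the line to the centre `u` gives a vector `z` with `ψ z = 0`. The line
through `point i` and `z` contains no centre, hence a further point of the system. -/
theorem apply_point_eq_zero_of_separates {u : V} {ψ : Dual F V} (hS : S.IsExtremal 1 d α β)
    (hu0 : u ≠ 0) (hu : S.IsCentre α (F ∙ u))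
    (hψ : ∀ v ≠ 0, S.IsCentre α (F ∙ v) → ψ v ≠ 0) (hi : i ≠ i')
    (hsep : α = 1 ∨ (S.quotient (F ∙ u) hu.point_notMem).Separates i i')
    (hψi : ψ (S.point i) = 0) : ψ (S.point i') = 0 := by
  have : Finite V := Module.finite_of_finite F
  have hu1 := finrank_span_singleton (K := F) hu0
  let z := S.point i' - (ψ (S.point i') / ψ u) • u
  have hψz : ψ z = 0 := by simp [z, div_mul_cancel₀ _ (hψ u hu0 hu)]
  have hmkQ : (F ∙ u).mkQ z = (F ∙ u).mkQ (S.point i') := by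
    simp [z]
  have hY : span F {S.point i, z} ≤ ker ψ := by
    rw [span_le, Set.pair_subset_iff]
    exact ⟨hψi, hψz⟩
  obtain ⟨i₁, hi₁, hi₁i⟩ := S.exists_point_mem_notMem (N := α) (Y := span F {S.point i, z})
    (Z := F ∙ S.point i) (pow_one q ▸ hS.card_form_le)
    (fun hle => (hS.quotient_of_finrank_eq hu hu1).point_notMem_span_singleton hi <| by
      have hz := mem_map_of_mem (f := (F ∙ u).mkQ) (hle (subset_span (Set.mem_insert_of_mem _ rfl)))
      rwa [hmkQ, map_span, Set.image_singleton] at hz)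
    (fun j hj => hS.form_point_ne_zero hu hu1 hi hsep j (hj (subset_span (by simp))))
    fun v hv hv0 hcentre => hψ v hv0 hcentre (hY hv)
  refine hS.apply_point_eq_zero hu hu1 hi hsep ?_ ?_ hψi (hY hi₁)
  · rintro rfl
    exact hi₁i (mem_span_singleton_self _)
  · have hmem := mem_map_of_mem (f := (F ∙ u).mkQ) hi₁
    rwa [map_span, Set.image_pair, hmkQ] at hmem

theorem exists_apply_point_eq_zero {ψ : Dual F V} (hS : S.IsExtremal 1 d α β)
    (hforms : ∀ j, ¬ ker ψ ≤ ker (S.form j))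
    (hψ : ∀ v ≠ 0, S.IsCentre α (F ∙ v) → ψ v ≠ 0) : ∃ i, ψ (S.point i) = 0 := by
  have : Finite V := Module.finite_of_finite F
  have hker : ¬ ker ψ ≤ ⊥ := fun hle => by
    have hinj :=
      LinearMap.finrank_le_finrank_of_injective (LinearMap.ker_eq_bot.1 (le_bot_iff.1 hle))
    rw [finrank_self, hS.finrank_eq] at hinj
    omega
  obtain ⟨i, hi, -⟩ := S.exists_point_mem_notMem (N := α) (pow_one q ▸ hS.card_form_le) hker hforms
    fun v hv hv0 hcentre => hψ v hv0 hcentre hv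
  exact ⟨i, hi⟩

theorem nontrivial_point [Nonempty ι] (hS : S.IsExtremal k (d + 1) α β) : Nontrivial ι := by
  have hpos : 0 < β * q ^ (d + 1) := hS.card_point ▸ Fintype.card_pos
  rw [← Fintype.one_lt_card_iff_nontrivial, hS.card_point]
  calc 1 < q ^ (d + 1) := Nat.one_lt_pow d.succ_ne_zero Fintype.one_lt_card
    _ ≤ β * q ^ (d + 1) := Nat.le_mul_of_pos_left _ (Nat.pos_of_mul_pos_right hpos)

theorem exists_dual_forall_apply_point_eq_zero [Nonempty ι] (hS : S.IsExtremal 1 (l + 1) α β) :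
    ∃ ψ : Dual F V, ψ ≠ 0 ∧ ∀ i, ψ (S.point i) = 0 := by
  obtain ⟨u, hu0, hu⟩ := hS.exists_isCentre_span_singleton
  rw [pow_zero, mul_one] at hu
  have hu1 := finrank_span_singleton (K := F) hu0
  have hT := hS.quotient_of_finrank_eq hu hu1
  set T := S.quotient (F ∙ u) hu.point_notMem
  by_cases hisolated : ∃ i, ∀ i', i ≠ i' → ¬ (α = 1 ∨ T.Separates i i')
  · obtain ⟨i, hi⟩ := hisolated
    have := hS.nontrivial_point
    obtain ⟨i', hi'⟩ := exists_ne i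
    have hsep : ∀ i', ¬ T.Separates i i' := fun i' hsep => by
      obtain rfl | hne := eq_or_ne i i'
      · obtain ⟨j, j', hjj'⟩ := hsep
        exact hjj' (mul_comm _ _)
      · exact hi i' hne (Or.inr hsep)
    obtain ⟨χ, hχ0, hχ⟩ := hT.exists_dual_of_not_separates (mt Or.inl (hi i' hi'.symm)) hsep
    refine ⟨χ ∘ₗ (F ∙ u).mkQ, fun h => hχ0 ?_, hχ⟩
    exact (LinearMap.cancel_right (F ∙ u).mkQ_surjective).1 h
  · push Not at hisolated
    have hforms : ∀ j i, S.form j (S.point i) ≠ 0 := fun j i =>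
      let ⟨_, hi, hsep⟩ := hisolated i
      hS.form_point_ne_zero hu hu1 hi hsep j
    obtain ⟨_, hne, hne_sep⟩ := hisolated (Classical.arbitrary ι)
    obtain ⟨ψ, hψ0, hψ, hcentre⟩ :=
      hS.exists_dual_forall_isCentre_apply_ne_zero (hS.two_le hu hu1 hne hne_sep) hforms
    obtain ⟨i, hi⟩ := hS.exists_apply_point_eq_zero hψ hcentre
    have hstep : ∀ {i i'}, α = 1 ∨ T.Separates i i' → ψ (S.point i) = 0 → ψ (S.point i') = 0 := by
      intro i i' hsep hψi
      obtain rfl | hne := eq_or_ne i i'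
      · exact hψi
      · exact hS.apply_point_eq_zero_of_separates hu0 hu hcentre hne hsep hψi
    refine ⟨ψ, hψ0, fun i' => ?_⟩
    obtain ⟨z, -, hsep⟩ := hisolated i
    rcases hsep with hα | hsep
    · exact hstep (Or.inl hα) hi
    · rcases hsep.or_separates (i' := i') fun j => hforms j i' with hsep' | hsep'
      · exact hstep (Or.inr hsep') hi
      · exact hstep (Or.inr hsep') (hstep (Or.inr hsep) hi)

end IsExtremal
end Span

section Main

variable {F ι : Type*} [Field F] [Fintype F] [Fintype ι]

local notation "q" => Fintype.card F

theorem IsExtremal.exists_submodule_forall_point_mem {k l α β : ℕ} [Nonempty ι] {V κ : Type*}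
    [AddCommGroup V] [Module F V] [FiniteDimensional F V] [Fintype κ]
    {S : PointHyperplaneSystem F V ι κ} (hS : S.IsExtremal (k + 1) (l + 1) α β) :
    ∃ X : Submodule F V, finrank F X = l + 3 ∧ ∀ i, S.point i ∈ X := by
  induction k generalizing V κ with
  | zero =>
    obtain ⟨ψ, hψ0, hψ⟩ := hS.exists_dual_forall_apply_point_eq_zero
    have hker := Dual.finrank_ker_add_one_of_ne_zero hψ0
    have hV := hS.finrank_eq
    exact ⟨ker ψ, by omega, hψ⟩
  | succ k ih =>
    have : Finite V := Module.finite_of_finite F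
    have hcontain : ∀ u ≠ 0, S.IsCentre (α * q ^ (k + 1)) (F ∙ u) →
        ∃ X : Submodule F V, u ∈ X ∧ finrank F X = l + 4 ∧ ∀ i, S.point i ∈ X := by
      intro u hu0 hu
      have hu1 := finrank_span_singleton (K := F) hu0
      obtain ⟨X, hX, hpoint⟩ := ih (hS.quotient hu le_rfl (by rw [hu1]))
      exact ⟨X.comap (F ∙ u).mkQ, (span_singleton_le_iff_mem _ _).1 (le_comap_mkQ _ X),
        by rw [finrank_comap_mkQ, hX, hu1], hpoint⟩
    obtain ⟨u, hu0, hu⟩ := hS.exists_isCentre_span_singleton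
    obtain ⟨X, -, hX, hXpoint⟩ := hcontain u hu0 hu
    have hXtop : X ≠ ⊤ := by
      rintro rfl
      rw [finrank_top, hS.finrank_eq] at hX
      omega
    obtain ⟨v, hvX, hv⟩ := S.exists_isCentre_notMem
      (hS.card_form_le.trans_eq (by rw [pow_succ, mul_assoc])) hXtop hXpoint
    obtain ⟨Y, hvY, hY, hYpoint⟩ := hcontain v (fun h => hvX (h ▸ X.zero_mem)) hv
    have hlt : finrank F (X ⊓ Y : Submodule F V) < finrank F Y :=
      finrank_lt_finrank_of_lt (inf_le_right.lt_of_not_ge fun hle => hvX (hle hvY).1)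
    obtain ⟨Z, hZ, hZfinrank⟩ := exists_le_finrank_eq (W := X ⊓ Y) (m := l + 3) (by omega)
      (by rw [hS.finrank_eq]; omega)
    exact ⟨Z, hZfinrank, fun i => hZ ⟨hXpoint i, hYpoint i⟩⟩

theorem IsBlocking.nonempty_form {V κ : Type*} [AddCommGroup V] [Module F V]
    [FiniteDimensional F V] {S : PointHyperplaneSystem F V ι κ} {k d : ℕ}
    (hV : finrank F V = k + d + 3) (hS : S.IsBlocking (k + 1))
    (hι : Fintype.card ι ≤ (q + 1) * q ^ (d + 1)) : Nonempty κ := by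
  by_contra hempty
  rw [not_nonempty_iff] at hempty
  have : Fintype κ := Fintype.ofIsEmpty
  have hpos : 0 < q ^ (d + 1) := by positivity
  obtain ⟨U, hUk, hU⟩ := exists_isCentre (a := 0) (a' := q + 2) (by omega)
    (show Fintype.card ι < (q + 2) * q ^ (d + 1) by linarith) k S hV (by simp)
  have hT : (S.quotient U hU.point_notMem).IsBlocking 1 :=
    IsBlocking.quotient (by rwa [add_comm]) _ hUk
  have hquot := finrank_quotient_add_finrank U
  have hbound := hT.pow_finrank_le_of_isEmpty
  rw [show finrank F (V ⧸ U) = d + 3 by omega] at hbound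
  have hq : 1 < q ^ (d + 1) := Nat.one_lt_pow d.succ_ne_zero Fintype.one_lt_card
  refine hbound.not_gt ?_
  calc Fintype.card ι * (q - 1) + 1 ≤ (q + 1) * q ^ (d + 1) * (q - 1) + 1 := by gcongr
    _ < (q + 1) * q ^ (d + 1) * (q - 1) + q ^ (d + 1) := by gcongr
    _ = q ^ (d + 3) := by
      obtain ⟨r, hr⟩ : ∃ r, q = r + 1 := ⟨q - 1, (Nat.sub_add_cancel Fintype.card_pos).symm⟩
      rw [hr, Nat.add_sub_cancel]
      ring

theorem IsBlocking.exists_submodule_forall_point_mem {V κ : Type*} [AddCommGroup V] [Module F V]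
    [FiniteDimensional F V] [Fintype κ] {S : PointHyperplaneSystem F V ι κ} {k : ℕ}
    (hV : finrank F V = 2 * k + 2) (hS : S.IsBlocking (k + 1))
    (hcard : Fintype.card ι + Fintype.card κ = (q + 1) * q ^ k) :
    ∃ X : Submodule F V, finrank F X = k + 2 ∧ ∀ i, S.point i ∈ X := by
  obtain _ | l := k
  · exact ⟨⊤, by rw [finrank_top, hV], fun i => mem_top⟩
  obtain hι | hι := isEmpty_or_nonempty ι
  · obtain ⟨X, -, hX⟩ := exists_le_finrank_eq (W := (⊥ : Submodule F V)) (m := l + 3)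
      (by rw [finrank_bot]; omega) (by omega)
    exact ⟨X, hX, isEmptyElim⟩
  obtain ⟨α, β, hαβ, hκ, hι⟩ := hS.exists_card_eq_mul_pow hV hcard
  have hα : 0 < α := by
    have := hS.nonempty_form (d := l) (by omega) (by omega)
    exact Nat.pos_of_mul_pos_right (hκ ▸ Fintype.card_pos)
  have hext : S.IsExtremal (l + 1) (l + 1) α β :=
    ⟨by omega, hS, hαβ, hα, hι.le, hκ.le⟩
  exact hext.exists_submodule_forall_point_mem

end Main

end PointHyperplaneSystem

theorem stmt_18_general {F V : Type*} [Field F] [Fintype F] [AddCommGroup V] [Module F V] {k : ℕ}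
    (hV : Module.finrank F V = 2 * k + 2) {B0 Bn : Set (Submodule F V)}
    (hB0 : ∀ p ∈ B0, Module.finrank F p = 1) (hBn : ∀ H ∈ Bn, Module.finrank F H = 2 * k + 1)
    (hblock : ∀ W : Submodule F V, Module.finrank F W = k + 1 →
      (∃ p ∈ B0, p ≤ W) ∨ ∃ H ∈ Bn, W ≤ H)
    (hsize : B0.ncard + Bn.ncard = (Fintype.card F + 1) * Fintype.card F ^ k) :
    ∃ X : Submodule F V, Module.finrank F X = k + 2 ∧ ∀ p ∈ B0, p ≤ X := by
  have : Module.Finite F V := Module.finite_of_finrank_pos (by omega)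
  have : Finite V := Module.finite_of_finite F
  have : Finite (Submodule F V) := Finite.of_injective _ SetLike.coe_injective
  have : Fintype B0 := Fintype.ofFinite B0
  have : Fintype Bn := Fintype.ofFinite Bn
  let point (p : B0) : V := (Projectivization.mk'' p.1 (hB0 p p.2)).rep
  have hpoint : ∀ p : B0, F ∙ point p = p := fun p => by
    rw [← Projectivization.submodule_eq, Projectivization.submodule_mk'']
  have hform : ∀ H : Bn, ∃ f : Module.Dual F V, f ≠ 0 ∧ H ≤ LinearMap.ker f := fun H =>
    Submodule.exists_le_ker_of_lt_top _ <| Submodule.lt_top_of_finrank_lt_finrank <| by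
      rw [hBn H H.2, hV]
      omega
  choose form hform0 hform using hform
  let S : PointHyperplaneSystem F V B0 Bn :=
    ⟨point, form, fun p => Projectivization.rep_nonzero _, hform0⟩
  have hS : S.IsBlocking (k + 1) := fun W hW => (hblock W hW).imp
    (fun ⟨p, hp, hpW⟩ => ⟨⟨p, hp⟩, hpW ((hpoint ⟨p, hp⟩).le (Submodule.mem_span_singleton_self _))⟩)
    fun ⟨H, hH, hWH⟩ => ⟨⟨H, hH⟩, hWH.trans (hform ⟨H, hH⟩)⟩
  obtain ⟨X, hX, hpX⟩ := hS.exists_submodule_forall_point_mem hV (by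
    rw [← hsize]
    simp only [← Nat.card_coe_set_eq, Nat.card_eq_fintype_card])
  exact ⟨X, hX, fun p hp =>
    (hpoint ⟨p, hp⟩).ge.trans ((Submodule.span_singleton_le_iff_mem _ _).2 (hpX ⟨p, hp⟩))⟩

/-- Let `B = B0 ∪ Bn` be a blocking set of points and hyperplanes
with respect to `k`-spaces in `PG(2k+1,q)` with `|B| = (q+1)·q^k`.  Then `B0` is
contained in a `(k+1)`-space. -/
theorem stmt_18 {F : Type} [Field F] [Fintype F] (k : ℕ) (hk : 1 ≤ k)
    (B0 Bn : Set (Submodule F (Fin (2 * k + 2) → F)))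
    (hB0 : ∀ p ∈ B0, Module.finrank F p = 1)
    (hBn : ∀ H ∈ Bn, Module.finrank F H = 2 * k + 1)
    (hblock : ∀ W : Submodule F (Fin (2 * k + 2) → F), Module.finrank F W = k + 1 →
      (∃ p ∈ B0, p ≤ W) ∨ (∃ H ∈ Bn, W ≤ H))
    (hsize : B0.ncard + Bn.ncard = (Fintype.card F + 1) * (Fintype.card F) ^ k) :
    ∃ SIG : Submodule F (Fin (2 * k + 2) → F), Module.finrank F SIG = k + 2 ∧ ∀ p ∈ B0, p ≤ SIG :=
  stmt_18_general (Module.finrank_fin_fun F) hB0 hBn hblock hsize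
end

section
/- Let q be a prime power, k ≥ 1, and n = 2k+1. Let B = B_0 ∪ B_{n-1} be a blocking set with respect to k-spaces in PG(2k+1,q) consisting of points and hyperplanes with |B| = (q+1)·q^k. Then there exists a (k-1)-space σ of PG(2k+1,q) that is contained in every hyperplane of B_{n-1}. -/
/-!
Give a `(k - 1)`-space `X` the weight "number of hyperplanes of `E` through `X` plus `q` times the
number of points of `B` on `X`". Counting the `k`-spaces through `X` bounds this weight from below,
and summing it over the hyperplanes of a `k`-space tangent to a minimal blocking set bounds
`#E` from below; with the dual bound this yields `#B + #E ≥ (q + 1) * q ^ k`, and in case of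
equality `#B = q ^ k * b` and `#E = q ^ k * e` with `b + e = q + 1`. All these estimates are then
equalities.

Let `W` be a `k`-space blocked by a single hyperplane. Equality forces the `b` points of `B` in
each `(k + 1)`-space `W ⊔ A` to be collinear; if `b ≥ 2`, the weights show that these lines
all meet `W` in the same point `C`. Every `(k - 1)`-space of `W` through `C` lies on `q` members of
a pencil of hyperplanes belonging to `E`, so `B`, which is disjoint from these, lies on the
remaining member. Letting the `(k - 1)`-space vary, `B` spans at most a `(k + 1)`-space. If
`e ≥ 2`, the dual of this is the theorem. If `e = 1`, then `#B = q ^ (k + 1)`, so a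
`(k + 1)`-space `R` contains `B` and every member of `E` cuts `R` in the complement of `B`.
-/

namespace ProjBlocking

open Finset Module
open scoped Classical

section Counting

/-- The number `1 + q + ⋯ + q ^ (m - 1)` of points of an `(m - 1)`-space over a field with `q`
elements. -/
def numPoints (q m : ℕ) : ℕ := ∑ i ∈ range m, q ^ i

theorem numPoints_one (q : ℕ) : numPoints q 1 = 1 := by simp [numPoints]

theorem numPoints_succ (q m : ℕ) : numPoints q (m + 1) = numPoints q m + q ^ m :=
  sum_range_succ _ _

theorem numPoints_succ' (q m : ℕ) : numPoints q (m + 1) = q * numPoints q m + 1 :=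
  geom_sum_succ

theorem numPoints_add (q m n : ℕ) :
    numPoints q (m + n) = numPoints q m + q ^ m * numPoints q n := by
  simp only [numPoints, sum_range_add, pow_add, mul_sum]

theorem add_one_mul_pow_le_numPoints_mul (q : ℕ) {k : ℕ} (hk : k ≠ 0) :
    (q + 1) * q ^ k ≤ numPoints q (k + 1) * q := by
  obtain ⟨k, rfl⟩ := Nat.exists_eq_succ_of_ne_zero hk
  rw [numPoints_succ, numPoints_succ]
  calc (q + 1) * q ^ (k + 1) = (q ^ k + q ^ (k + 1)) * q := by ring
    _ ≤ (numPoints q k + q ^ k + q ^ (k + 1)) * q := by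
      gcongr
      exact Nat.le_add_left _ _

theorem exists_mul_lt_and_le_mul {m n : ℕ} (hm : 0 < m) (hn : 0 < n) :
    ∃ x, m * x < n ∧ n ≤ m * (x + 1) := by
  have := Nat.lt_mul_div_succ (n - 1) hm
  have := Nat.mul_div_le (n - 1) m
  exact ⟨(n - 1) / m, by omega, by omega⟩

variable {α : Type*} [LE α]

/-- The members of `S` lying below `x`; for a set of points, those on the subspace `x`. -/
noncomputable def below (S : Finset α) (x : α) : Finset α := {a ∈ S | a ≤ x}

/-- The members of `S` lying above `x`; for a set of hyperplanes, those through the subspace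
`x`. -/
noncomputable def above (S : Finset α) (x : α) : Finset α := {a ∈ S | x ≤ a}

variable {S : Finset α} {a x : α}

@[simp]
theorem mem_below : a ∈ below S x ↔ a ∈ S ∧ a ≤ x := mem_filter

@[simp]
theorem mem_above : a ∈ above S x ↔ a ∈ S ∧ x ≤ a := mem_filter

theorem sum_card_below_eq_sum_card_above (S T : Finset α) :
    ∑ x ∈ T, #(below S x) = ∑ a ∈ S, #(above T a) :=
  (sum_card_bipartiteAbove_eq_sum_card_bipartiteBelow (· ≤ ·)).symm

end Counting

section Subspaces

variable {F V : Type*} [Field F] [AddCommGroup V] [Module F V] {A A' H X Y Z : Submodule F V}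
  {d m : ℕ}

theorem exists_finrank_eq_one_not_le (h : ¬Y ≤ X) : ∃ A ≤ Y, finrank F A = 1 ∧ ¬A ≤ X := by
  obtain ⟨v, hvY, hvX⟩ := SetLike.not_le_iff_exists.1 h
  have hv : v ≠ 0 := by rintro rfl; exact hvX X.zero_mem
  exact ⟨F ∙ v, by simpa using hvY, finrank_span_singleton hv, by simpa using hvX⟩

theorem eq_of_le_of_finrank_eq_one (hA : finrank F A = 1) (hA' : finrank F A' = 1)
    (h : A ≤ A') : A = A' :=
  have := Module.finite_of_finrank_eq_succ hA'
  Submodule.eq_of_le_of_finrank_eq h (hA.trans hA'.symm)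

variable [FiniteDimensional F V]

theorem finrank_sup_of_finrank_eq_one (hA : finrank F A = 1) (hAX : ¬A ≤ X) :
    finrank F ↥(X ⊔ A) = finrank F X + 1 := by
  have hinf : A ⊓ X = ⊥ :=
    ((Submodule.isAtom_iff_finrank_eq_one.2 hA).not_le_iff_disjoint.1 hAX).eq_bot
  have := Submodule.finrank_sup_add_finrank_inf_eq X A
  rwa [inf_comm, hinf, finrank_bot, hA] at this

theorem sup_eq_iff_of_finrank_eq_one (hA : finrank F A = 1) (hAX : ¬A ≤ X) (hXZ : X ≤ Z)
    (hZ : finrank F Z = finrank F X + 1) : X ⊔ A = Z ↔ A ≤ Z := by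
  constructor
  · rintro rfl
    exact le_sup_right
  · intro hAZ
    exact Submodule.eq_of_le_of_finrank_eq (sup_le hXZ hAZ)
      ((finrank_sup_of_finrank_eq_one hA hAX).trans hZ.symm)

theorem finrank_inf_add_one (hH : finrank F H + 1 = finrank F V) (hXH : ¬X ≤ H) :
    finrank F ↥(X ⊓ H) + 1 = finrank F X := by
  have hlt : finrank F H < finrank F ↥(X ⊔ H) :=
    Submodule.finrank_lt_finrank_of_lt (right_lt_sup.2 hXH)
  have hle := Submodule.finrank_le (X ⊔ H)
  have := Submodule.finrank_sup_add_finrank_inf_eq X H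
  omega

theorem exists_finrank_eq_of_le (hXY : X ≤ Y) (hX : finrank F X ≤ d) (hY : d ≤ finrank F Y) :
    ∃ Z, X ≤ Z ∧ Z ≤ Y ∧ finrank F Z = d := by
  induction d, hX using Nat.le_induction with
  | base => exact ⟨X, le_rfl, hXY, rfl⟩
  | succ d _ ih =>
    obtain ⟨Z, hXZ, hZY, rfl⟩ := ih (by omega)
    obtain ⟨v, hvY, hvZ⟩ := SetLike.exists_of_lt (hZY.lt_of_ne (by rintro rfl; omega))
    exact ⟨Z ⊔ F ∙ v, hXZ.trans le_sup_left, sup_le hZY (by simpa using hvY),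
      Submodule.finrank_sup_span_singleton hvZ⟩

variable [Finite F]

instance : Finite (Submodule F V) :=
  have := Module.finite_of_finite F (M := V)
  inferInstance

/-- The subspaces of vector-space dimension `d` between `X` and `Y`. -/
noncomputable def between (X Y : Submodule F V) (d : ℕ) : Finset (Submodule F V) :=
  (Set.toFinite {Z | X ≤ Z ∧ Z ≤ Y ∧ finrank F Z = d}).toFinset

@[simp]
theorem mem_between : Z ∈ between X Y d ↔ X ≤ Z ∧ Z ≤ Y ∧ finrank F Z = d := by
  simp [between]

theorem above_between (X Y A : Submodule F V) (d : ℕ) :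
    above (between X Y d) A = between (X ⊔ A) Y d := by
  ext Z
  simp only [mem_above, mem_between, sup_le_iff]
  tauto

theorem below_between (X Y A : Submodule F V) (d : ℕ) :
    below (between X Y d) A = between X (Y ⊓ A) d := by
  ext Z
  simp only [mem_below, mem_between, le_inf_iff]
  tauto

theorem between_finrank_left (hXY : X ≤ Y) : between X Y (finrank F X) = {X} := by
  ext Z
  simp only [mem_between, mem_singleton]
  constructor
  · rintro ⟨hXZ, -, hZ⟩
    exact (Submodule.eq_of_le_of_finrank_eq hXZ hZ.symm).symm
  · rintro rfl
    exact ⟨le_rfl, hXY, rfl⟩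

theorem between_finrank_right (hXY : X ≤ Y) : between X Y (finrank F Y) = {Y} := by
  ext Z
  simp only [mem_between, mem_singleton]
  constructor
  · rintro ⟨-, hZY, hZ⟩
    exact Submodule.eq_of_le_of_finrank_eq hZY hZ
  · rintro rfl
    exact ⟨hXY, le_rfl, rfl⟩

local notation "q" => Nat.card F
local notation "θ" => numPoints (Nat.card F)

theorem card_between_bot_one (Y : Submodule F V) : #(between ⊥ Y 1) = θ (finrank F Y) := by
  have e : {P : Submodule F Y // finrank F P = 1} ≃ between ⊥ Y 1 :=
    ((Submodule.mapIic Y).toEquiv.subtypeEquiv fun P =>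
      (Submodule.finrank_map_subtype_eq Y P).symm.congr_left).trans <|
    (Equiv.subtypeSubtypeEquivSubtypeInter (· ≤ Y) (finrank F · = 1)).trans <|
    Equiv.subtypeEquivRight fun Z => by simp
  rw [← Nat.card_eq_finsetCard, ← Nat.card_congr e,
    ← Nat.card_congr (Projectivization.equivSubmodule F Y),
    Projectivization.card_of_finrank F Y rfl, numPoints]

theorem card_points_not_le (hXY : X ≤ Y) (hY : finrank F Y = finrank F X + m) :
    #{A ∈ between ⊥ Y 1 | ¬A ≤ X} = q ^ finrank F X * θ m := by
  have h := card_filter_add_card_filter_not (s := between ⊥ Y 1) (· ≤ X)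
  rw [← below, below_between, inf_eq_right.2 hXY, card_between_bot_one, card_between_bot_one, hY,
    numPoints_add] at h
  exact Nat.add_left_cancel h

theorem card_between_finrank_add_one (hXY : X ≤ Y) (hY : finrank F Y = finrank F X + m) :
    #(between X Y (finrank F X + 1)) = θ m := by
  have hmaps : ∀ A ∈ ({A ∈ between ⊥ Y 1 | ¬A ≤ X} : Finset (Submodule F V)),
      X ⊔ A ∈ between X Y (finrank F X + 1) := by
    intro A hA
    simp only [mem_filter, mem_between] at hA ⊢
    exact ⟨le_sup_left, sup_le hXY hA.1.2.1, finrank_sup_of_finrank_eq_one hA.1.2.2 hA.2⟩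
  have hfiber : ∀ Z ∈ between X Y (finrank F X + 1),
      #{A ∈ {A ∈ between ⊥ Y 1 | ¬A ≤ X} | X ⊔ A = Z} = q ^ finrank F X := by
    intro Z hZ
    obtain ⟨hXZ, hZY, hZ⟩ := mem_between.1 hZ
    rw [← mul_one (q ^ _), ← numPoints_one q, ← card_points_not_le hXZ hZ]
    congr 1
    ext A
    simp only [mem_filter, mem_between, bot_le, true_and]
    constructor
    · rintro ⟨⟨⟨-, hA⟩, hAX⟩, h⟩
      exact ⟨⟨(sup_eq_iff_of_finrank_eq_one hA hAX hXZ hZ).1 h, hA⟩, hAX⟩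
    · rintro ⟨⟨hAZ, hA⟩, hAX⟩
      exact ⟨⟨⟨hAZ.trans hZY, hA⟩, hAX⟩, (sup_eq_iff_of_finrank_eq_one hA hAX hXZ hZ).2 hAZ⟩
  have h := card_eq_sum_card_fiberwise hmaps
  rw [sum_congr rfl hfiber, sum_const, smul_eq_mul, card_points_not_le hXY hY, mul_comm] at h
  exact (Nat.eq_of_mul_eq_mul_right (pow_pos Nat.card_pos _) h).symm

end Subspaces

section Duality

variable {F V : Type*} [Field F] [AddCommGroup V] [Module F V] {S : Finset (Submodule F V)}
  {A X Y Z : Submodule F V} {d e m : ℕ}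

/-- The image of a set of subspaces under the duality of the projective space: the annihilators,
in the dual vector space, of the members of `S`. -/
noncomputable def annihilators (S : Finset (Submodule F V)) : Finset (Submodule F (Dual F V)) :=
  S.map ⟨Submodule.dualAnnihilator, fun _ _ => Subspace.dualAnnihilator_inj.1⟩

@[simp]
theorem card_annihilators (S : Finset (Submodule F V)) : #(annihilators S) = #S := card_map _

@[simp]
theorem mem_annihilators {W : Submodule F (Dual F V)} :
    W ∈ annihilators S ↔ ∃ X ∈ S, X.dualAnnihilator = W := mem_map

@[simp]
theorem annihilators_empty : annihilators (∅ : Finset (Submodule F V)) = ∅ := map_empty _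

@[simp]
theorem annihilators_singleton : annihilators {X} = {X.dualAnnihilator} := map_singleton _ _

@[simp]
theorem annihilators_nonempty : (annihilators S).Nonempty ↔ S.Nonempty := map_nonempty

theorem filter_annihilators (S : Finset (Submodule F V)) {p : Submodule F (Dual F V) → Prop}
    {r : Submodule F V → Prop} [DecidablePred p] [DecidablePred r]
    (h : ∀ X, p X.dualAnnihilator ↔ r X) :
    {W ∈ annihilators S | p W} = annihilators {X ∈ S | r X} := by
  ext W
  simp only [mem_filter, mem_annihilators]
  constructor
  · rintro ⟨⟨X, hX, rfl⟩, hp⟩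
    exact ⟨X, ⟨hX, (h X).1 hp⟩, rfl⟩
  · rintro ⟨X, ⟨hX, hr⟩, rfl⟩
    exact ⟨⟨X, hX, rfl⟩, (h X).2 hr⟩

@[simp]
theorem below_annihilators (S : Finset (Submodule F V)) (X : Submodule F V) :
    below (annihilators S) X.dualAnnihilator = annihilators (above S X) :=
  filter_annihilators S fun _ => Subspace.dualAnnihilator_le_dualAnnihilator_iff

@[simp]
theorem above_annihilators (S : Finset (Submodule F V)) (X : Submodule F V) :
    above (annihilators S) X.dualAnnihilator = annihilators (below S X) :=
  filter_annihilators S fun _ => Subspace.dualAnnihilator_le_dualAnnihilator_iff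

variable [FiniteDimensional F V]

theorem exists_dualAnnihilator_eq (W : Submodule F (Dual F V)) :
    ∃ X : Submodule F V, X.dualAnnihilator = W :=
  ⟨W.dualCoannihilator, Subspace.dualCoannihilator_dualAnnihilator_eq⟩

theorem finrank_dualAnnihilator_eq_iff (hd : d + e = finrank F V) :
    finrank F X.dualAnnihilator = e ↔ finrank F X = d := by
  have := Subspace.finrank_add_finrank_dualAnnihilator_eq X
  omega

variable [Finite F]

local notation "q" => Nat.card F
local notation "θ" => numPoints (Nat.card F)

theorem annihilators_between (X Y : Submodule F V) (hd : d + e = finrank F V) :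
    annihilators (between X Y d) = between Y.dualAnnihilator X.dualAnnihilator e := by
  ext W
  obtain ⟨Z, rfl⟩ := exists_dualAnnihilator_eq W
  simp only [mem_annihilators, Subspace.dualAnnihilator_inj, exists_eq_right, mem_between,
    Subspace.dualAnnihilator_le_dualAnnihilator_iff, finrank_dualAnnihilator_eq_iff hd]
  tauto

theorem card_between_of_finrank_eq_add_one (hXY : X ≤ Y) (hd : finrank F Y = d + 1)
    (hY : finrank F Y = finrank F X + m) : #(between X Y d) = θ m := by
  have hX' := Subspace.finrank_add_finrank_dualAnnihilator_eq X
  have hY' := Subspace.finrank_add_finrank_dualAnnihilator_eq Y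
  rw [← card_annihilators, annihilators_between X Y (e := finrank F Y.dualAnnihilator + 1)
    (by omega)]
  exact card_between_finrank_add_one (Subspace.dualAnnihilator_le_dualAnnihilator_iff.2 hXY)
    (by omega)

theorem card_between_filter_not_le (hXY : X ≤ Y) (hd : finrank F Y = d + 1)
    (hY : finrank F Y = finrank F X + m + 1) (hA : finrank F A = 1) (hAX : ¬A ≤ X)
    (hAY : A ≤ Y) : #{Z ∈ between X Y d | ¬A ≤ Z} = q ^ m := by
  have h := card_filter_add_card_filter_not (s := between X Y d) (A ≤ ·)
  have hXA := finrank_sup_of_finrank_eq_one hA hAX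
  rw [← above, above_between, card_between_of_finrank_eq_add_one hXY hd (m := m + 1) hY,
    card_between_of_finrank_eq_add_one (sup_le hXY hAY) hd (m := m) (by omega),
    numPoints_succ] at h
  exact Nat.add_left_cancel h

theorem exists_between_not_le (hXY : X ≤ Y) (hd : finrank F Y = d + 1) (hA : finrank F A = 1)
    (hAX : ¬A ≤ X) (hAY : A ≤ Y) : ∃ Z ∈ between X Y d, ¬A ≤ Z := by
  obtain ⟨m, hm⟩ := Nat.exists_eq_add_of_lt (Submodule.finrank_lt_finrank_of_lt
    (hXY.lt_of_ne (by rintro rfl; exact hAX hAY)))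
  have hpos : 0 < #{Z ∈ between X Y d | ¬A ≤ Z} := by
    rw [card_between_filter_not_le hXY hd hm hA hAX hAY]
    exact pow_pos Nat.card_pos m
  obtain ⟨Z, hZ⟩ := card_pos.1 hpos
  exact ⟨Z, mem_filter.1 hZ⟩

end Duality

section Collinear

variable {F V : Type*} [Field F] [AddCommGroup V] [Module F V] [FiniteDimensional F V] [Finite F]
  {A A' A₁ H H' H₁ R X : Submodule F V} {P : Finset (Submodule F V)} {d m : ℕ}

local notation "q" => Nat.card F
local notation "θ" => numPoints (Nat.card F)

/-- The hyperplanes of `R`, of vector-space dimension `d`, that meet `P` but miss `A`. -/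
noncomputable def missing (P : Finset (Submodule F V)) (R A : Submodule F V) (d : ℕ) :
    Finset (Submodule F V) :=
  {W ∈ between ⊥ R d | (below P W).Nonempty ∧ ¬A ≤ W}

theorem card_le_card_missing (hR : finrank F R = m + 2) (hA : finrank F A = 1) (hAR : A ≤ R) :
    #{W ∈ between ⊥ R (m + 1) | (below P W).Nonempty} ≤
      θ (m + 1) + #(missing P R A (m + 1)) := by
  rw [← card_filter_add_card_filter_not (A ≤ ·), filter_filter _ (fun W => ¬A ≤ W), ← missing]
  gcongr
  rw [← card_between_of_finrank_eq_add_one hAR (d := m + 1) hR (m := m + 1) (by omega),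
    ← bot_sup_eq A, ← above_between, bot_sup_eq]
  exact card_le_card (filter_subset_filter _ (filter_subset _ _))

theorem sum_card_below_missing (hR : finrank F R = m + 2)
    (hP : ∀ A ∈ P, finrank F A = 1 ∧ A ≤ R) (hA : A ∈ P) :
    ∑ W ∈ missing P R A (m + 1), #(below (P.erase A) W) = (#P - 1) * q ^ m := by
  rw [sum_card_below_eq_sum_card_above, ← card_erase_of_mem hA, ← smul_eq_mul, ← sum_const]
  refine sum_congr rfl fun B hB => ?_
  obtain ⟨hBA, hBP⟩ := mem_erase.1 hB
  have hBA' : ¬A ≤ B := fun h => hBA (eq_of_le_of_finrank_eq_one (hP A hA).1 (hP B hBP).1 h).symm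
  rw [← card_between_filter_not_le (hP B hBP).2 (d := m + 1) (m := m) hR
    (by rw [hR, (hP B hBP).1]; ring) (hP A hA).1 hBA' (hP A hA).2]
  congr 1
  ext W
  simp only [missing, mem_above, mem_filter, mem_between]
  constructor
  · rintro ⟨⟨⟨-, hWR, hW⟩, -, hAW⟩, hBW⟩
    exact ⟨⟨hBW, hWR, hW⟩, hAW⟩
  · rintro ⟨⟨hBW, hWR, hW⟩, hAW⟩
    exact ⟨⟨⟨bot_le, hWR, hW⟩, ⟨B, mem_below.2 ⟨hBP, hBW⟩⟩, hAW⟩, hBW⟩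

/-- In an `(m + 1)`-space, `θ (m + 1) + (#P - 1) * q ^ m` hyperplanes is the most that `P` can
meet, since each point other than `A₁` accounts for at most `q ^ m` hyperplanes missing `A₁`.
Equality forces these batches to be disjoint, so no hyperplane separates `A₁` from a line
`A ⊔ A'`. -/
theorem le_sup_of_card_le (hR : finrank F R = m + 2) (hP : ∀ A ∈ P, finrank F A = 1 ∧ A ≤ R)
    (hcard : θ (m + 1) + (#P - 1) * q ^ m ≤
      #{W ∈ between ⊥ R (m + 1) | (below P W).Nonempty})
    (hA₁ : A₁ ∈ P) (hA : A ∈ P) (hA' : A' ∈ P) (hne : A ≠ A') : A₁ ≤ A ⊔ A' := by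
  by_contra hsep
  obtain ⟨W, hW, hA₁W⟩ := exists_between_not_le (sup_le (hP A hA).2 (hP A' hA').2) hR
    (hP A₁ hA₁).1 hsep (hP A₁ hA₁).2
  obtain ⟨hAW, hWR, hWrank⟩ := mem_between.1 hW
  rw [sup_le_iff] at hAW
  have hmem_erase : ∀ {B Z}, B ∈ P → B ≤ Z → ¬A₁ ≤ Z → B ∈ below (P.erase A₁) Z := by
    intro B Z hB hBZ hA₁Z
    exact mem_below.2 ⟨mem_erase.2 ⟨by rintro rfl; exact hA₁Z hBZ, hB⟩, hBZ⟩
  have hpos : ∀ Z ∈ missing P R A₁ (m + 1), 1 ≤ #(below (P.erase A₁) Z) := by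
    intro Z hZ
    obtain ⟨-, ⟨B, hB⟩, hA₁Z⟩ := mem_filter.1 hZ
    exact card_pos.2 ⟨B, hmem_erase (mem_below.1 hB).1 (mem_below.1 hB).2 hA₁Z⟩
  have htwo : 1 < #(below (P.erase A₁) W) :=
    one_lt_card.2 ⟨A, hmem_erase hA hAW.1 hA₁W, A', hmem_erase hA' hAW.2 hA₁W, hne⟩
  have hWN : W ∈ missing P R A₁ (m + 1) := mem_filter.2
    ⟨mem_between.2 ⟨bot_le, hWR, hWrank⟩, ⟨A, mem_below.2 ⟨hA, hAW.1⟩⟩, hA₁W⟩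
  have hlt := sum_lt_sum hpos ⟨W, hWN, htwo⟩
  rw [sum_card_below_missing hR hP hA₁, sum_const, smul_eq_mul, mul_one] at hlt
  have hle := card_le_card_missing (P := P) hR (hP A₁ hA₁).1 (hP A₁ hA₁).2
  omega

theorem inf_le_of_card_le (hV : finrank F V = d + 1) (hX : finrank F X + m + 2 = finrank F V)
    (hP : ∀ H ∈ P, finrank F H = d ∧ X ≤ H)
    (hcard : θ (m + 1) + (#P - 1) * q ^ m ≤
      #{W ∈ between X ⊤ (finrank F X + 1) | (above P W).Nonempty})
    (hH₁ : H₁ ∈ P) (hH : H ∈ P) (hH' : H' ∈ P) (hne : H ≠ H') : H ⊓ H' ≤ H₁ := by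
  rw [← Subspace.dualAnnihilator_le_dualAnnihilator_iff, Subspace.dualAnnihilator_inf_eq]
  refine le_sup_of_card_le (P := annihilators P) (R := X.dualAnnihilator) (m := m) ?_ ?_ ?_
    (mem_annihilators.2 ⟨_, hH₁, rfl⟩) (mem_annihilators.2 ⟨_, hH, rfl⟩)
    (mem_annihilators.2 ⟨_, hH', rfl⟩) (Subspace.dualAnnihilator_inj.not.2 hne)
  · exact (finrank_dualAnnihilator_eq_iff (d := finrank F X) (by omega)).2 rfl
  · intro W hW
    obtain ⟨H, hH, rfl⟩ := mem_annihilators.1 hW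
    exact ⟨(finrank_dualAnnihilator_eq_iff hV.symm).2 (hP H hH).1,
      Subspace.dualAnnihilator_le_dualAnnihilator_iff.2 (hP H hH).2⟩
  · rw [card_annihilators]
    have hblocked : ∀ W : Submodule F V,
        (below (annihilators P) W.dualAnnihilator).Nonempty ↔ (above P W).Nonempty := by simp
    rwa [← Submodule.dualAnnihilator_top,
      ← annihilators_between X ⊤ (d := finrank F X + 1) (by omega),
      filter_annihilators _ hblocked, card_annihilators]

end Collinear

section DoubleCounting

variable {F V : Type*} [Field F] [AddCommGroup V] [Module F V] [FiniteDimensional F V] [Finite F]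
  {A W X : Submodule F V} {B E : Finset (Submodule F V)} {d m : ℕ}

local notation "q" => Nat.card F
local notation "θ" => numPoints (Nat.card F)

theorem sum_card_below_up (hX : finrank F X + m = finrank F V)
    (hB : ∀ A ∈ B, finrank F A = 1) :
    ∑ W ∈ between X ⊤ (finrank F X + 1), #(below B W) + #(below B X) =
      #B + θ m * #(below B X) := by
  have hcount : ∀ A ∈ B, #(above (between X ⊤ (finrank F X + 1)) A) =
      if A ≤ X then θ m else 1 := by
    intro A hA
    rw [above_between]
    split_ifs with hAX
    · rw [sup_eq_left.2 hAX]
      exact card_between_finrank_add_one le_top (by rw [finrank_top, hX])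
    · rw [← finrank_sup_of_finrank_eq_one (hB A hA) hAX, between_finrank_left le_top,
        card_singleton]
  rw [sum_card_below_eq_sum_card_above, sum_congr rfl hcount, sum_ite, sum_const, sum_const,
    ← below, ← card_filter_add_card_filter_not (s := B) (· ≤ X), ← below]
  simp only [smul_eq_mul]
  ring

theorem sum_card_above_up (hE : ∀ H ∈ E, finrank F H = finrank F X + m) :
    ∑ W ∈ between X ⊤ (finrank F X + 1), #(above E W) = θ m * #(above E X) := by
  have hcount : ∀ H ∈ E, #(below (between X ⊤ (finrank F X + 1)) H) =
      if X ≤ H then θ m else 0 := by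
    intro H hH
    rw [below_between, top_inf_eq]
    split_ifs with hXH
    · exact card_between_finrank_add_one hXH (hE H hH)
    · exact card_eq_zero.2 (eq_empty_of_forall_notMem fun W hW =>
        hXH ((mem_between.1 hW).1.trans (mem_between.1 hW).2.1))
  rw [← sum_card_below_eq_sum_card_above, sum_congr rfl hcount, ← sum_filter, ← above, sum_const,
    smul_eq_mul, mul_comm]

theorem sum_card_above_down (hW : finrank F W = d + 1)
    (hE : ∀ H ∈ E, finrank F H + 1 = finrank F V) :
    ∑ X ∈ between ⊥ W d, #(above E X) + #(above E W) =
      #E + θ (d + 1) * #(above E W) := by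
  have hcount : ∀ H ∈ E, #(below (between ⊥ W d) H) = if W ≤ H then θ (d + 1) else 1 := by
    intro H hH
    rw [below_between]
    split_ifs with hWH
    · rw [inf_eq_left.2 hWH]
      exact card_between_of_finrank_eq_add_one bot_le hW (by rw [finrank_bot]; omega)
    · have := finrank_inf_add_one (hE H hH) hWH
      rw [show d = finrank F ↥(W ⊓ H) by omega, between_finrank_right bot_le,
        card_singleton]
  rw [← sum_card_below_eq_sum_card_above, sum_congr rfl hcount, sum_ite, sum_const, sum_const,
    ← above, ← card_filter_add_card_filter_not (s := E) (W ≤ ·), ← above]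
  simp only [smul_eq_mul]
  ring

theorem sum_card_below_down (hW : finrank F W = d + 1) (hB : ∀ A ∈ B, finrank F A = 1) :
    ∑ X ∈ between ⊥ W d, #(below B X) = θ d * #(below B W) := by
  have hcount : ∀ A ∈ B, #(above (between ⊥ W d) A) = if A ≤ W then θ d else 0 := by
    intro A hA
    rw [above_between, bot_sup_eq]
    split_ifs with hAW
    · exact card_between_of_finrank_eq_add_one hAW hW (by rw [hW, hB A hA, add_comm])
    · exact card_eq_zero.2 (eq_empty_of_forall_notMem fun X hX =>
        hAW ((mem_between.1 hX).1.trans (mem_between.1 hX).2.1))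
  rw [sum_card_below_eq_sum_card_above, sum_congr rfl hcount, ← sum_filter, ← below, sum_const,
    smul_eq_mul, mul_comm]

theorem sum_ite_between (hW : finrank F W = d + 1) (hA : finrank F A = 1) (hAW : A ≤ W)
    (a b : ℕ) : ∑ X ∈ between ⊥ W d, (if A ≤ X then a else b) = θ d * a + q ^ d * b := by
  have hAbot : ¬A ≤ ⊥ := by
    rw [le_bot_iff]
    rintro rfl
    simp at hA
  rw [sum_ite, sum_const, sum_const, card_between_filter_not_le bot_le hW (m := d)
    (by rw [hW, finrank_bot, zero_add]) hA hAbot hAW, ← above, above_between, bot_sup_eq,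
    card_between_of_finrank_eq_add_one hAW hW (m := d) (by omega), smul_eq_mul, smul_eq_mul]

end DoubleCounting

section Blocking

variable {F V : Type*} [Field F] [AddCommGroup V] [Module F V]

/-- The points `B` and the hyperplanes `E` of the `(2k+1)`-dimensional projective space of `V`
form a blocking set with respect to `k`-spaces. -/
structure IsBlocking (k : ℕ) (B E : Finset (Submodule F V)) : Prop where
  finrank_eq : finrank F V = 2 * k + 2
  finrank_point : ∀ A ∈ B, finrank F A = 1
  finrank_hyperplane : ∀ H ∈ E, finrank F H = 2 * k + 1
  blocks : ∀ W : Submodule F V, finrank F W = k + 1 → (below B W).Nonempty ∨ (above E W).Nonempty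

/-- `W` is a `k`-space blocked by the point `A` alone. -/
structure PointTangent (k : ℕ) (B E : Finset (Submodule F V)) (A W : Submodule F V) : Prop where
  finrank_eq : finrank F W = k + 1
  below_eq : below B W = {A}
  above_eq : above E W = ∅

/-- `W` is a `k`-space blocked by the hyperplane `H` alone. -/
structure HyperplaneTangent (k : ℕ) (B E : Finset (Submodule F V)) (H W : Submodule F V) :
    Prop where
  finrank_eq : finrank F W = k + 1
  below_eq : below B W = ∅
  above_eq : above E W = {H}

/-- A blocking set each of whose members is indispensable, as witnessed by a tangent
`k`-space. -/
structure IsMinimalBlocking (k : ℕ) (B E : Finset (Submodule F V)) : Prop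
    extends IsBlocking k B E where
  exists_pointTangent : ∀ A ∈ B, ∃ W, PointTangent k B E A W
  exists_hyperplaneTangent : ∀ H ∈ E, ∃ W, HyperplaneTangent k B E H W

/-- The number of hyperplanes of `E` through `X` plus `q` times the number of points of `B`
on `X`. -/
noncomputable def weight (B E : Finset (Submodule F V)) (X : Submodule F V) : ℕ :=
  #(above E X) + Nat.card F * #(below B X)

variable {A H R W X : Submodule F V} {B E : Finset (Submodule F V)} {k m x : ℕ}

theorem PointTangent.mem (h : PointTangent k B E A W) : A ∈ below B W := by
  rw [h.below_eq, mem_singleton]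

theorem PointTangent.below_eq_empty (ht : PointTangent k B E A W) (hXW : X ≤ W)
    (hAX : ¬A ≤ X) : below B X = ∅ := by
  refine eq_empty_of_forall_notMem fun A' hA' => hAX ?_
  have hA'W : A' ∈ below B W :=
    mem_below.2 ⟨(mem_below.1 hA').1, (mem_below.1 hA').2.trans hXW⟩
  rw [ht.below_eq, mem_singleton] at hA'W
  exact hA'W ▸ (mem_below.1 hA').2

theorem HyperplaneTangent.above_eq_empty (ht : HyperplaneTangent k B E H W) (hWR : W ≤ R)
    (hRH : ¬R ≤ H) : above E R = ∅ := by
  refine eq_empty_of_forall_notMem fun H' hH' => hRH ?_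
  have hH'W : H' ∈ above E W :=
    mem_above.2 ⟨(mem_above.1 hH').1, hWR.trans (mem_above.1 hH').2⟩
  rw [ht.above_eq, mem_singleton] at hH'W
  exact hH'W ▸ (mem_above.1 hH').2

theorem PointTangent.ite_le_weight (ht : PointTangent k B E A W)
    (hm : ¬A ≤ X → m ≤ weight B E X) : (if A ≤ X then Nat.card F else m) ≤ weight B E X := by
  split_ifs with hAX
  · have hpos : 0 < #(below B X) :=
      card_pos.2 ⟨A, mem_below.2 ⟨(mem_below.1 ht.mem).1, hAX⟩⟩
    exact (Nat.le_mul_of_pos_right _ hpos).trans (Nat.le_add_left _ _)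
  · exact hm hAX

theorem IsBlocking.exists_pointTangent (h : IsBlocking k B E)
    (hA : ¬IsBlocking k (B.erase A) E) : ∃ W, PointTangent k B E A W := by
  by_contra! htangent
  refine hA ⟨h.finrank_eq, fun A hA => h.finrank_point A (mem_of_mem_erase hA),
    h.finrank_hyperplane, fun W hW => or_iff_not_imp_right.2 fun hEW => ?_⟩
  rw [not_nonempty_iff_eq_empty] at hEW
  obtain hBW | hBW := h.blocks W hW
  · obtain ⟨A', hA'W, hne⟩ : ∃ A' ∈ below B W, A' ≠ A := by
      by_contra! hBA
      exact htangent W ⟨hW, eq_singleton_iff_nonempty_unique_mem.2 ⟨hBW, hBA⟩, hEW⟩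
    rw [mem_below] at hA'W
    exact ⟨A', mem_below.2 ⟨mem_erase.2 ⟨hne, hA'W.1⟩, hA'W.2⟩⟩
  · simp [hEW] at hBW

theorem IsBlocking.exists_hyperplaneTangent (h : IsBlocking k B E)
    (hH : ¬IsBlocking k B (E.erase H)) : ∃ W, HyperplaneTangent k B E H W := by
  by_contra! htangent
  refine hH ⟨h.finrank_eq, h.finrank_point,
    fun H hH => h.finrank_hyperplane H (mem_of_mem_erase hH),
    fun W hW => or_iff_not_imp_left.2 fun hBW => ?_⟩
  rw [not_nonempty_iff_eq_empty] at hBW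
  obtain hEW | hEW := h.blocks W hW
  · simp [hBW] at hEW
  · obtain ⟨H', hH'W, hne⟩ : ∃ H' ∈ above E W, H' ≠ H := by
      by_contra! hEH
      exact htangent W ⟨hW, hBW, eq_singleton_iff_nonempty_unique_mem.2 ⟨hEW, hEH⟩⟩
    rw [mem_above] at hH'W
    exact ⟨H', mem_above.2 ⟨mem_erase.2 ⟨hne, hH'W.1⟩, hH'W.2⟩⟩

theorem IsBlocking.exists_isMinimalBlocking (h : IsBlocking k B E) :
    ∃ B' ⊆ B, ∃ E' ⊆ E, IsMinimalBlocking k B' E' := by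
  obtain ⟨⟨B', E'⟩, hle, hmin⟩ := exists_minimal_le_of_wellFoundedLT
    (fun S : Finset (Submodule F V) × Finset (Submodule F V) => IsBlocking k S.1 S.2) (B, E) h
  refine ⟨B', hle.1, E', hle.2, hmin.prop, fun A hA => ?_, fun H hH => ?_⟩
  · refine IsBlocking.exists_pointTangent hmin.prop fun hB => notMem_erase A B' ?_
    exact (hmin.le_of_le (y := (B'.erase A, E')) hB ⟨erase_subset _ _, le_rfl⟩).1 hA
  · refine IsBlocking.exists_hyperplaneTangent hmin.prop fun hE => notMem_erase H E' ?_
    exact (hmin.le_of_le (y := (B', E'.erase H)) hE ⟨le_rfl, erase_subset _ _⟩).2 hH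

variable [FiniteDimensional F V]

theorem IsBlocking.dual (h : IsBlocking k B E) :
    IsBlocking k (annihilators E) (annihilators B) := by
  have hV := h.finrank_eq
  refine ⟨by rw [Subspace.dual_finrank_eq, hV], fun A hA => ?_, fun H hH => ?_, fun W hW => ?_⟩
  · obtain ⟨H, hH, rfl⟩ := mem_annihilators.1 hA
    exact (finrank_dualAnnihilator_eq_iff (by omega)).2 (h.finrank_hyperplane H hH)
  · obtain ⟨A, hA, rfl⟩ := mem_annihilators.1 hH
    exact (finrank_dualAnnihilator_eq_iff (by omega)).2 (h.finrank_point A hA)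
  · obtain ⟨X, rfl⟩ := exists_dualAnnihilator_eq W
    simpa using (h.blocks X ((finrank_dualAnnihilator_eq_iff (by omega)).1 hW)).symm

theorem PointTangent.dual (hV : finrank F V = 2 * k + 2) (h : PointTangent k B E A W) :
    HyperplaneTangent k (annihilators E) (annihilators B) A.dualAnnihilator W.dualAnnihilator where
  finrank_eq := (finrank_dualAnnihilator_eq_iff (by omega)).2 h.finrank_eq
  below_eq := by simp [h.above_eq]
  above_eq := by simp [h.below_eq]

theorem HyperplaneTangent.dual (hV : finrank F V = 2 * k + 2) (h : HyperplaneTangent k B E H W) :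
    PointTangent k (annihilators E) (annihilators B) H.dualAnnihilator W.dualAnnihilator where
  finrank_eq := (finrank_dualAnnihilator_eq_iff (by omega)).2 h.finrank_eq
  below_eq := by simp [h.above_eq]
  above_eq := by simp [h.below_eq]

theorem IsMinimalBlocking.dual (h : IsMinimalBlocking k B E) :
    IsMinimalBlocking k (annihilators E) (annihilators B) := by
  refine ⟨h.toIsBlocking.dual, fun A hA => ?_, fun H hH => ?_⟩
  · obtain ⟨H, hH, rfl⟩ := mem_annihilators.1 hA
    obtain ⟨W, hW⟩ := h.exists_hyperplaneTangent H hH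
    exact ⟨_, hW.dual h.finrank_eq⟩
  · obtain ⟨A, hA, rfl⟩ := mem_annihilators.1 hH
    obtain ⟨W, hW⟩ := h.exists_pointTangent A hA
    exact ⟨_, hW.dual h.finrank_eq⟩

variable [Finite F]

local notation "q" => Nat.card F
local notation "θ" => numPoints (Nat.card F)

theorem IsBlocking.numPoints_le (h : IsBlocking k B E) (hX : finrank F X = k) :
    θ (k + 2) ≤ #B + θ (k + 1) * weight B E X := by
  have hV := h.finrank_eq
  have hpoint := sum_card_below_up (X := X) (m := k + 2) (by omega) h.finrank_point
  have hhyper := sum_card_above_up (X := X) (m := k + 1) fun H hH => by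
    rw [h.finrank_hyperplane H hH, hX]; ring
  have hblock : θ (k + 2) ≤
      ∑ W ∈ between X ⊤ (finrank F X + 1), (#(below B W) + #(above E W)) := by
    rw [← card_between_finrank_add_one (le_top (a := X)) (by rw [finrank_top]; omega),
      card_eq_sum_ones]
    refine sum_le_sum fun W hW => ?_
    obtain hW | hW := h.blocks W (by rw [(mem_between.1 hW).2.2, hX])
    · exact Nat.le_add_right_of_le hW.card_pos
    · exact Nat.le_add_left_of_le hW.card_pos
  rw [sum_add_distrib, hhyper] at hblock
  rw [numPoints_succ' _ (k + 1)] at hpoint hblock ⊢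
  rw [weight]
  linarith

theorem IsBlocking.lt_weight_add (h : IsBlocking k B E) (hX : finrank F X = k)
    (hx : #B ≤ θ (k + 1) * x) : q < weight B E X + x := by
  have hle := h.numPoints_le hX
  rw [numPoints_succ' _ (k + 1)] at hle
  refine Nat.lt_of_mul_lt_mul_left (a := θ (k + 1)) ?_
  linarith

theorem IsBlocking.sum_weight (h : IsBlocking k B E) (hW : finrank F W = k + 1) :
    ∑ X ∈ between ⊥ W k, weight B E X =
      #E + q * θ k * (#(above E W) + #(below B W)) := by
  have hV := h.finrank_eq
  have habove := sum_card_above_down hW (E := E) fun H hH => by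
    rw [h.finrank_hyperplane H hH, hV]
  rw [numPoints_succ'] at habove
  have hbelow := sum_card_below_down hW h.finrank_point
  simp only [weight, sum_add_distrib, ← mul_sum, hbelow]
  linarith

theorem PointTangent.sum_weight (ht : PointTangent k B E A W) (h : IsBlocking k B E) :
    ∑ X ∈ between ⊥ W k, weight B E X = #E + θ k * q := by
  rw [h.sum_weight ht.finrank_eq, ht.above_eq, ht.below_eq, card_empty, card_singleton]
  ring

theorem PointTangent.sum_ite (ht : PointTangent k B E A W) (h : IsBlocking k B E) :
    ∑ X ∈ between ⊥ W k, (if A ≤ X then q else m) = θ k * q + q ^ k * m :=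
  have ⟨hA, hAW⟩ := mem_below.1 ht.mem
  sum_ite_between ht.finrank_eq (h.finrank_point A hA) hAW _ _

theorem PointTangent.pow_mul_le_card (ht : PointTangent k B E A W) (h : IsBlocking k B E)
    (hm : ∀ X : Submodule F V, finrank F X = k → m ≤ weight B E X) : q ^ k * m ≤ #E := by
  have hle : ∑ X ∈ between ⊥ W k, (if A ≤ X then q else m) ≤
      ∑ X ∈ between ⊥ W k, weight B E X :=
    sum_le_sum fun X hX => ht.ite_le_weight fun _ => hm X (mem_between.1 hX).2.2
  rw [ht.sum_ite h, ht.sum_weight h] at hle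
  omega

end Blocking

section Extremal

variable {F V : Type*} [Field F] [AddCommGroup V] [Module F V]

/-- A minimal blocking set attaining the bound `(q + 1) * q ^ k`. Then `q ^ k` divides the numbers
of points and of hyperplanes, and `b` and `e` are the quotients. -/
structure IsExtremal (k b e : ℕ) (B E : Finset (Submodule F V)) : Prop
    extends IsMinimalBlocking k B E where
  left_pos : 0 < b
  right_pos : 0 < e
  add_eq : b + e = Nat.card F + 1
  card_points : #B = Nat.card F ^ k * b
  card_hyperplanes : #E = Nat.card F ^ k * e

variable {A H R W X : Submodule F V} {B E : Finset (Submodule F V)} {b e k x : ℕ}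

theorem IsExtremal.points_nonempty [Finite F] (h : IsExtremal k b e B E) : B.Nonempty := by
  rw [← card_pos, h.card_points]
  exact Nat.mul_pos (pow_pos Nat.card_pos k) h.left_pos

variable [FiniteDimensional F V]

theorem IsExtremal.dual (h : IsExtremal k b e B E) :
    IsExtremal k e b (annihilators E) (annihilators B) where
  toIsMinimalBlocking := h.toIsMinimalBlocking.dual
  left_pos := h.right_pos
  right_pos := h.left_pos
  add_eq := by rw [add_comm, h.add_eq]
  card_points := by rw [card_annihilators, h.card_hyperplanes]
  card_hyperplanes := by rw [card_annihilators, h.card_points]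

variable [Finite F]

local notation "q" => Nat.card F
local notation "θ" => numPoints (Nat.card F)

theorem IsMinimalBlocking.pow_mul_le (h : IsMinimalBlocking k B E) (hB : B.Nonempty)
    (hx : #B ≤ θ (k + 1) * (x + 1)) : q ^ k * q ≤ #E + q ^ k * x := by
  obtain ⟨A, hA⟩ := hB
  obtain ⟨W, hW⟩ := h.exists_pointTangent A hA
  have hle := hW.pow_mul_le_card h.toIsBlocking (m := q - x) fun X hX => by
    have := h.lt_weight_add hX hx
    omega
  rw [Nat.mul_sub] at hle
  omega

theorem IsMinimalBlocking.hyperplanes_nonempty (h : IsMinimalBlocking k B E) (hk : k ≠ 0)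
    (hcard : #B + #E ≤ (q + 1) * q ^ k) (hB : B.Nonempty) : E.Nonempty := by
  have hq : 1 < q := Finite.one_lt_card
  have hle := h.pow_mul_le hB (x := q - 1) (by
    rw [Nat.sub_add_cancel hq.le]
    exact (le_self_add.trans hcard).trans (add_one_mul_pow_le_numPoints_mul q hk))
  rw [← card_pos]
  rw [Nat.mul_sub, mul_one] at hle
  have := Nat.le_mul_of_pos_right (q ^ k) (zero_lt_one.trans hq)
  have : 0 < q ^ k := by positivity
  omega

theorem IsMinimalBlocking.nonempty_of_card_le (h : IsMinimalBlocking k B E) (hk : k ≠ 0)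
    (hcard : #B + #E ≤ (q + 1) * q ^ k) : B.Nonempty ∧ E.Nonempty := by
  have hdual : E.Nonempty → B.Nonempty := fun hE => annihilators_nonempty.1 <|
    h.dual.hyperplanes_nonempty hk (by simpa [add_comm] using hcard) (by simpa using hE)
  obtain ⟨W, -, -, hW⟩ := exists_finrank_eq_of_le (d := k + 1) (bot_le (a := (⊤ : Submodule F V)))
    (by simp) (by rw [finrank_top, h.finrank_eq]; omega)
  obtain hBW | hEW := h.blocks W hW
  · have hB := hBW.mono (filter_subset _ _)
    exact ⟨hB, h.hyperplanes_nonempty hk hcard hB⟩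
  · have hE := hEW.mono (filter_subset _ _)
    exact ⟨hdual hE, hE⟩

theorem IsMinimalBlocking.exists_isExtremal (h : IsMinimalBlocking k B E) (hk : k ≠ 0)
    (hcard : #B + #E ≤ (q + 1) * q ^ k) : ∃ b e, IsExtremal k b e B E := by
  obtain ⟨hB, hE⟩ := h.nonempty_of_card_le hk hcard
  have hθ : 0 < θ (k + 1) := by rw [numPoints_succ']; omega
  obtain ⟨x, hxlt, hxle⟩ := exists_mul_lt_and_le_mul hθ hB.card_pos
  obtain ⟨y, hylt, hyle⟩ := exists_mul_lt_and_le_mul hθ hE.card_pos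
  have hqk : 0 < q ^ k := pow_pos Nat.card_pos k
  have hEle := h.pow_mul_le hB hxle
  have hBle := h.dual.pow_mul_le (x := y) (by simpa using hE) (by simpa using hyle)
  rw [card_annihilators] at hBle
  have hlt : x + y < q := by
    refine Nat.lt_of_mul_lt_mul_left (a := θ (k + 1)) ?_
    linarith [add_one_mul_pow_le_numPoints_mul q hk]
  have hge : q ≤ x + y + 1 := by
    refine Nat.le_of_mul_le_mul_left (c := q ^ k) ?_ hqk
    linarith
  have hxy : q = x + y + 1 := by omega
  refine ⟨x + 1, y + 1, h, x.succ_pos, y.succ_pos, by omega, ?_, ?_⟩ <;>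
  · rw [hxy] at hEle hBle hcard ⊢
    linarith

theorem IsExtremal.hyperplanes_nonempty (h : IsExtremal k b e B E) : E.Nonempty :=
  annihilators_nonempty.1 h.dual.points_nonempty

theorem IsExtremal.le_weight (h : IsExtremal k b e B E) (hX : finrank F X = k) :
    e ≤ weight B E X := by
  have hB : #B ≤ θ (k + 1) * b := by
    rw [h.card_points, numPoints_succ]
    exact Nat.mul_le_mul_right b (Nat.le_add_left _ _)
  have := h.lt_weight_add hX hB
  have := h.add_eq
  omega

theorem PointTangent.weight_eq (ht : PointTangent k B E A W) (h : IsExtremal k b e B E)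
    (hX : X ∈ between ⊥ W k) : weight B E X = if A ≤ X then q else e := by
  refine ((sum_eq_sum_iff_of_le (f := fun X => if A ≤ X then q else e)
    fun X hX => ?_).1 ?_ X hX).symm
  · exact ht.ite_le_weight fun _ => h.le_weight (mem_between.1 hX).2.2
  · rw [ht.sum_ite h.toIsBlocking, ht.sum_weight h.toIsBlocking, h.card_hyperplanes, add_comm]

theorem PointTangent.above_eq_empty (ht : PointTangent k B E A W) (h : IsExtremal k b e B E)
    (hX : X ∈ between ⊥ W k) (hAX : A ≤ X) : above E X = ∅ := by
  have hw := ht.weight_eq h hX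
  rw [if_pos hAX, weight] at hw
  have hpos : 0 < #(below B X) := card_pos.2 ⟨A, mem_below.2 ⟨(mem_below.1 ht.mem).1, hAX⟩⟩
  have := Nat.le_mul_of_pos_right q hpos
  exact card_eq_zero.1 (by omega)

theorem PointTangent.card_above (ht : PointTangent k B E A W) (h : IsExtremal k b e B E)
    (hX : X ∈ between ⊥ W k) (hAX : ¬A ≤ X) : #(above E X) = e := by
  have hw := ht.weight_eq h hX
  rwa [if_neg hAX, weight, ht.below_eq_empty (mem_between.1 hX).2.1 hAX, card_empty, mul_zero,
    add_zero] at hw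

theorem IsExtremal.not_le (h : IsExtremal k b e B E) (hA : A ∈ B) (hH : H ∈ E) : ¬A ≤ H := by
  intro hAH
  obtain ⟨W, hW⟩ := h.exists_pointTangent A hA
  have hAW := (mem_below.1 hW.mem).2
  have hWH : ¬W ≤ H := fun hWH => notMem_empty H (hW.above_eq ▸ mem_above.2 ⟨hH, hWH⟩)
  have hrank := finrank_inf_add_one (by rw [h.finrank_hyperplane H hH, h.finrank_eq]) hWH
  rw [hW.finrank_eq, Nat.add_right_cancel_iff] at hrank
  have hempty := hW.above_eq_empty h (mem_between.2 ⟨bot_le, inf_le_left, hrank⟩)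
    (le_inf hAW hAH)
  exact notMem_empty H (hempty ▸ mem_above.2 ⟨hH, inf_le_right⟩)

theorem HyperplaneTangent.card_below (ht : HyperplaneTangent k B E H W)
    (h : IsExtremal k b e B E) (hWR : W ≤ R) (hR : finrank F R = k + 2) (hRH : ¬R ≤ H) :
    #(below B R) = b := by
  have hV := h.finrank_eq
  rw [← card_annihilators, ← above_annihilators]
  refine (ht.dual hV).card_above h.dual (mem_between.2 ⟨bot_le, ?_, ?_⟩)
    (Subspace.dualAnnihilator_le_dualAnnihilator_iff.not.2 hRH)
  · exact Subspace.dualAnnihilator_le_dualAnnihilator_iff.2 hWR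
  · exact (finrank_dualAnnihilator_eq_iff (by omega)).2 hR

end Extremal

section Centers

variable {F V : Type*} [Field F] [AddCommGroup V] [Module F V]

/-- `C` is a point of `W` through which every line joining `A` to another point of `B` in the
span of `W` and `A` passes. -/
structure IsCenterAt (B : Finset (Submodule F V)) (W A C : Submodule F V) : Prop where
  finrank_eq : finrank F C = 1
  le : C ≤ W
  le_sup : ∀ A' ∈ B, A' ≤ W ⊔ A → A' ≤ C ⊔ A

variable {A A₁ A₂ C C' H R W X Y Z : Submodule F V} {B E : Finset (Submodule F V)} {b e k : ℕ}

theorem HyperplaneTangent.mem (ht : HyperplaneTangent k B E H W) : H ∈ above E W := by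
  rw [ht.above_eq, mem_singleton]

theorem HyperplaneTangent.not_le (ht : HyperplaneTangent k B E H W) (hA : A ∈ B) : ¬A ≤ W :=
  fun hAW => notMem_empty A (ht.below_eq ▸ mem_below.2 ⟨hA, hAW⟩)

theorem HyperplaneTangent.below_eq_empty (ht : HyperplaneTangent k B E H W) (hXW : X ≤ W) :
    below B X = ∅ :=
  eq_empty_of_forall_notMem fun _ hA =>
    ht.not_le (mem_below.1 hA).1 ((mem_below.1 hA).2.trans hXW)

theorem IsCenterAt.le_card_below (hC : IsCenterAt B W A C) (hAZ : A ≤ Z) (hCZ : C ≤ Z) :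
    #(below B (W ⊔ A)) ≤ #(below B Z) :=
  card_le_card fun A' hA' => mem_below.2 ⟨(mem_below.1 hA').1,
    (hC.le_sup A' (mem_below.1 hA').1 (mem_below.1 hA').2).trans (sup_le hCZ hAZ)⟩

variable [FiniteDimensional F V]

theorem inf_eq_of_finrank_eq_add_one (hH : finrank F H + 1 = finrank F V) (hYH : ¬Y ≤ H)
    (hXY : X ≤ Y) (hXH : X ≤ H) (hX : finrank F X + 1 = finrank F Y) : Y ⊓ H = X := by
  have := finrank_inf_add_one hH hYH
  exact (Submodule.eq_of_le_of_finrank_eq (le_inf hXY hXH) (by omega)).symm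

theorem HyperplaneTangent.finrank_sup (ht : HyperplaneTangent k B E H W) (h : IsBlocking k B E)
    (hA : A ∈ B) : finrank F ↥(W ⊔ A) = k + 2 := by
  rw [finrank_sup_of_finrank_eq_one (h.finrank_point A hA) (ht.not_le hA), ht.finrank_eq]

theorem IsCenterAt.sup_eq (hC : IsCenterAt B W A C) (hA : finrank F A = 1) (hAC : ¬A ≤ C)
    (hB : ∀ A' ∈ B, finrank F A' = 1) (hBC : ∀ A' ∈ B, ¬A' ≤ C) (hA₁ : A₁ ∈ B)
    (hA₁W : A₁ ≤ W ⊔ A) : C ⊔ A₁ = C ⊔ A :=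
  (sup_eq_iff_of_finrank_eq_one (hB A₁ hA₁) (hBC A₁ hA₁) le_sup_left
    (finrank_sup_of_finrank_eq_one hA hAC)).2 (hC.le_sup A₁ hA₁ hA₁W)

variable [Finite F]

local notation "q" => Nat.card F
local notation "θ" => numPoints (Nat.card F)

theorem HyperplaneTangent.above_sup_eq_empty (ht : HyperplaneTangent k B E H W)
    (h : IsExtremal k b e B E) (hA : A ∈ B) : above E (W ⊔ A) = ∅ :=
  ht.above_eq_empty le_sup_left fun hle =>
    h.not_le hA (mem_above.1 ht.mem).1 (le_sup_right.trans hle)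

theorem HyperplaneTangent.card_below_sup (ht : HyperplaneTangent k B E H W)
    (h : IsExtremal k b e B E) (hA : A ∈ B) : #(below B (W ⊔ A)) = b :=
  ht.card_below h le_sup_left (ht.finrank_sup h.toIsBlocking hA) fun hle =>
    h.not_le hA (mem_above.1 ht.mem).1 (le_sup_right.trans hle)

theorem IsBlocking.card_not_nonempty_below_le (h : IsBlocking k B E) (hR : finrank F R = k + 2)
    (hER : above E R = ∅) (X : Submodule F V) :
    #{Z ∈ between X R (k + 1) | ¬(below B Z).Nonempty} ≤ #(above E X) := by
  refine (card_le_card fun Z hZ => ?_).trans (card_image_le (f := (R ⊓ ·)))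
  rw [mem_filter, mem_between] at hZ
  obtain ⟨⟨hXZ, hZR, hZ⟩, hBZ⟩ := hZ
  obtain ⟨G, hG⟩ := (h.blocks Z hZ).resolve_left hBZ
  obtain ⟨hGE, hZG⟩ := mem_above.1 hG
  have hRG : ¬R ≤ G := fun hRG => notMem_empty G (hER ▸ mem_above.2 ⟨hGE, hRG⟩)
  refine mem_image.2 ⟨G, mem_above.2 ⟨hGE, hXZ.trans hZG⟩, ?_⟩
  exact inf_eq_of_finrank_eq_add_one (by rw [h.finrank_hyperplane G hGE, h.finrank_eq]) hRG hZR hZG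
    (by rw [hZ, hR])

theorem IsExtremal.le_sup_of_mem_below (h : IsExtremal k b e B E) (hR : finrank F R = k + 2)
    (hER : above E R = ∅) (hBR : #(below B R) = b) (hA : A ∈ below B R) (hA₁ : A₁ ∈ below B R)
    (hA₂ : A₂ ∈ below B R) (hne : A₁ ≠ A₂) : A ≤ A₁ ⊔ A₂ := by
  refine le_sup_of_card_le hR (fun A hA => ⟨h.finrank_point A (mem_below.1 hA).1,
    (mem_below.1 hA).2⟩) ?_ hA hA₁ hA₂ hne
  have hblocked : ∀ W ∈ between ⊥ R (k + 1),
      (below (below B R) W).Nonempty ↔ (below B W).Nonempty := fun W hW => by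
    have hWR := (mem_between.1 hW).2.1
    exact exists_congr fun A => by
      simp only [mem_below]
      exact ⟨fun hA => ⟨hA.1.1, hA.2⟩, fun hA => ⟨⟨hA.1, hA.2.trans hWR⟩, hA.2⟩⟩
  have hunblocked := (h.card_not_nonempty_below_le hR hER ⊥).trans (card_filter_le _ _)
  have htotal := card_filter_add_card_filter_not (s := between ⊥ R (k + 1))
    (fun W => (below B W).Nonempty)
  rw [card_between_of_finrank_eq_add_one bot_le hR (m := k + 2) (by rw [finrank_bot, hR, zero_add]),
    numPoints_succ] at htotal
  rw [h.card_hyperplanes] at hunblocked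
  rw [hBR, filter_congr hblocked]
  have hq : q = (b - 1) + e := by have := h.add_eq; have := h.left_pos; omega
  have hpow : q ^ (k + 1) = (b - 1) * q ^ k + q ^ k * e := by
    rw [pow_succ]
    nth_rw 2 [hq]
    ring
  omega

theorem HyperplaneTangent.exists_isCenterAt (ht : HyperplaneTangent k B E H W)
    (h : IsExtremal k b e B E) (hb : 1 < b) (hA : A ∈ B) : ∃ C, IsCenterAt B W A C := by
  have hR := ht.finrank_sup h.toIsBlocking hA
  have hER := ht.above_sup_eq_empty h hA
  have hBR := ht.card_below_sup h hA
  have hAR : A ∈ below B (W ⊔ A) := mem_below.2 ⟨hA, le_sup_right⟩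
  obtain ⟨A₂, hA₂, hne⟩ := exists_mem_ne (hBR.symm ▸ hb) A
  obtain ⟨hA₂B, hA₂R⟩ := mem_below.1 hA₂
  have hline : finrank F ↥(A ⊔ A₂) = 2 := by
    rw [finrank_sup_of_finrank_eq_one (h.finrank_point A₂ hA₂B) fun hle => hne
      (eq_of_le_of_finrank_eq_one (h.finrank_point A₂ hA₂B) (h.finrank_point A hA) hle),
      h.finrank_point A hA]
  have hC : finrank F ↥(W ⊓ (A ⊔ A₂)) = 1 := by
    have := Submodule.finrank_sup_add_finrank_inf_eq W (A ⊔ A₂)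
    rw [← sup_assoc, sup_eq_left.2 hA₂R, hR, ht.finrank_eq, hline] at this
    omega
  refine ⟨W ⊓ (A ⊔ A₂), hC, inf_le_left, fun A' hA' hA'R => ?_⟩
  have hCA : W ⊓ (A ⊔ A₂) ⊔ A = A ⊔ A₂ := by
    refine Submodule.eq_of_le_of_finrank_eq (sup_le inf_le_right le_sup_left) ?_
    rw [finrank_sup_of_finrank_eq_one (h.finrank_point A hA)
      fun hle => ht.not_le hA (hle.trans inf_le_left), hC, hline]
  rw [hCA]
  exact h.le_sup_of_mem_below hR hER hBR (mem_below.2 ⟨hA', hA'R⟩) hAR hA₂ hne.symm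

/-- Of the `q + 1` subspaces between `X` and `W ⊔ A`, only `X ⊔ A` meets `B`; the others are
covered by distinct hyperplanes of `E`. -/
theorem IsCenterAt.card_le_card_above (hC : IsCenterAt B W A C)
    (ht : HyperplaneTangent k B E H W) (h : IsExtremal k b e B E) (hA : A ∈ B) (hCX : C ≤ X)
    (hX : X ∈ between ⊥ W k) : q ≤ #(above E X) := by
  obtain ⟨-, hXW, hXk⟩ := mem_between.1 hX
  have hR := ht.finrank_sup h.toIsBlocking hA
  have hmiss := card_between_filter_not_le (hXW.trans le_sup_left) hR (m := 1) (by omega)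
    (h.finrank_point A hA) (fun hAX => ht.not_le hA (hAX.trans hXW)) le_sup_right
  rw [pow_one] at hmiss
  rw [← hmiss]
  refine le_trans (card_le_card fun Z hZ => ?_)
    (h.card_not_nonempty_below_le hR (ht.above_sup_eq_empty h hA) X)
  obtain ⟨hZ, hAZ⟩ := mem_filter.1 hZ
  refine mem_filter.2 ⟨hZ, fun ⟨A', hA'⟩ => hAZ ?_⟩
  obtain ⟨hXZ, hZR, -⟩ := mem_between.1 hZ
  obtain ⟨hA'B, hA'Z⟩ := mem_below.1 hA'
  have hBC : ∀ A' ∈ B, ¬A' ≤ C := fun A' hA' hle => ht.not_le hA' (hle.trans hC.le)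
  calc A ≤ C ⊔ A := le_sup_right
    _ = C ⊔ A' := (hC.sup_eq (h.finrank_point A hA) (hBC A hA) h.finrank_point hBC hA'B
        (hA'Z.trans hZR)).symm
    _ ≤ Z := sup_le (hCX.trans hXZ) hA'Z

theorem IsCenterAt.card_above (hC : IsCenterAt B W A C) (ht : HyperplaneTangent k B E H W)
    (h : IsExtremal k b e B E) (hA : A ∈ B) (hX : X ∈ between ⊥ W k) :
    #(above E X) = if C ≤ X then q else e := by
  have hweight : ∀ X ∈ between ⊥ W k, #(above E X) = weight B E X := fun X hX => by
    rw [weight, ht.below_eq_empty (mem_between.1 hX).2.1, card_empty, mul_zero, add_zero]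
  refine ((sum_eq_sum_iff_of_le (f := fun X => if C ≤ X then q else e)
    (g := fun X => #(above E X)) fun X hX => ?_).1 ?_ X hX).symm
  · split_ifs with hCX
    · exact hC.card_le_card_above ht h hA hCX hX
    · exact (h.le_weight (mem_between.1 hX).2.2).trans_eq (hweight X hX).symm
  · rw [sum_congr rfl hweight, h.sum_weight ht.finrank_eq, ht.above_eq, ht.below_eq,
      sum_ite_between ht.finrank_eq hC.finrank_eq hC.le, h.card_hyperplanes, card_singleton,
      card_empty]
    ring

theorem IsCenterAt.eq (hC : IsCenterAt B W A C) (hC' : IsCenterAt B W A₁ C')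
    (ht : HyperplaneTangent k B E H W) (h : IsExtremal k b e B E) (hb : 1 < b) (hA : A ∈ B)
    (hA₁ : A₁ ∈ B) : C = C' := by
  by_contra hne
  have hC'C : ¬C' ≤ C := fun hle =>
    hne (eq_of_le_of_finrank_eq_one hC'.finrank_eq hC.finrank_eq hle).symm
  obtain ⟨X, hX, hC'X⟩ := exists_between_not_le hC.le ht.finrank_eq hC'.finrank_eq hC'C hC'.le
  obtain ⟨hCX, hXW, hXk⟩ := mem_between.1 hX
  have hX : X ∈ between ⊥ W k := mem_between.2 ⟨bot_le, hXW, hXk⟩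
  have hq := hC.card_above ht h hA hX
  rw [if_pos hCX, hC'.card_above ht h hA₁ hX, if_neg hC'X] at hq
  have := h.add_eq
  omega

theorem HyperplaneTangent.exists_forall_isCenterAt (ht : HyperplaneTangent k B E H W)
    (h : IsExtremal k b e B E) (hb : 1 < b) : ∃ C, ∀ A ∈ B, IsCenterAt B W A C := by
  obtain ⟨A, hA⟩ := h.points_nonempty
  obtain ⟨C, hC⟩ := ht.exists_isCenterAt h hb hA
  refine ⟨C, fun A' hA' => ?_⟩
  obtain ⟨C', hC'⟩ := ht.exists_isCenterAt h hb hA'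
  exact hC.eq hC' ht h hb hA hA' ▸ hC'

end Centers

section Span

variable {F V : Type*} [Field F] [AddCommGroup V] [Module F V] [FiniteDimensional F V] [Finite F]
  {C H M W X : Submodule F V} {B E P : Finset (Submodule F V)} {b d e k : ℕ}

local notation "q" => Nat.card F
local notation "θ" => numPoints (Nat.card F)

theorem HyperplaneTangent.card_nonempty_below_le (ht : HyperplaneTangent k B E H W)
    (h : IsExtremal k b e B E) (hC : ∀ A ∈ B, IsCenterAt B W A C) (hCX : C ≤ X)
    (hX : X ∈ between ⊥ W k) :
    #{Z ∈ between X ⊤ (k + 1) | (below B Z).Nonempty} ≤ q ^ k := by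
  obtain ⟨-, hXW, hXk⟩ := mem_between.1 hX
  have hsum := sum_card_below_up (X := X) (m := k + 2) (by rw [hXk, h.finrank_eq]; ring)
    h.finrank_point
  rw [ht.below_eq_empty hXW, card_empty, mul_zero, add_zero, add_zero, hXk, h.card_points] at hsum
  refine Nat.le_of_mul_le_mul_right ?_ h.left_pos
  rw [← hsum, ← smul_eq_mul]
  refine (card_nsmul_le_sum _ (fun Z => #(below B Z)) b fun Z hZ => ?_).trans
    (sum_le_sum_of_subset (filter_subset _ _))
  obtain ⟨hZ, A, hA⟩ := mem_filter.1 hZ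
  obtain ⟨hAB, hAZ⟩ := mem_below.1 hA
  rw [← ht.card_below_sup h hAB]
  exact (hC A hAB).le_card_below hAZ (hCX.trans (mem_between.1 hZ).1)

theorem HyperplaneTangent.inf_le_of_mem_above (ht : HyperplaneTangent k B E H W)
    (h : IsExtremal k b e B E) (hC : ∀ A ∈ B, IsCenterAt B W A C) (hCX : C ≤ X)
    (hX : X ∈ between ⊥ W k) (hcard : #(above E X) = q) {G H₁ H₂ : Submodule F V}
    (hG : G ∈ above E X) (hH₁ : H₁ ∈ above E X) (hH₂ : H₂ ∈ above E X) (hne : H₁ ≠ H₂) :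
    H₁ ⊓ H₂ ≤ G := by
  have hXk := (mem_between.1 hX).2.2
  have hV := h.finrank_eq
  refine inf_le_of_card_le hV (X := X) (m := k) (by omega) (fun H hH =>
    ⟨h.finrank_hyperplane H (mem_above.1 hH).1, (mem_above.1 hH).2⟩) ?_ hG hH₁ hH₂ hne
  have htotal := card_filter_add_card_filter_not (s := between X ⊤ (k + 1))
    (fun Z => (below B Z).Nonempty)
  have hall := card_between_finrank_add_one (m := k + 2) (le_top (a := X))
    (by rw [finrank_top]; omega)
  rw [hXk, numPoints_succ, pow_succ] at hall
  have hpoints := ht.card_nonempty_below_le h hC hCX hX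
  have hcover : #{Z ∈ between X ⊤ (k + 1) | ¬(below B Z).Nonempty} ≤
      #{Z ∈ between X ⊤ (k + 1) | (above (above E X) Z).Nonempty} := by
    refine card_le_card fun Z hZ => ?_
    obtain ⟨hZ, hBZ⟩ := mem_filter.1 hZ
    obtain ⟨hXZ, -, hZk⟩ := mem_between.1 hZ
    obtain ⟨G, hG⟩ := (h.blocks Z hZk).resolve_left hBZ
    obtain ⟨hGE, hZG⟩ := mem_above.1 hG
    exact mem_filter.2 ⟨hZ, G, mem_above.2 ⟨mem_above.2 ⟨hGE, hXZ.trans hZG⟩, hZG⟩⟩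
  rw [hXk, hcard]
  have hpow : q ^ k * q = (q - 1) * q ^ k + q ^ k := by
    obtain ⟨p, hp⟩ := Nat.exists_eq_succ_of_ne_zero (Nat.card_pos (α := F)).ne'
    rw [hp, Nat.succ_sub_one, Nat.succ_eq_add_one]
    ring
  omega

/-- The `q + 1` hyperplanes through `M` cover the space, so points outside `q` of them lie on the
remaining one. -/
theorem exists_hyperplane_ge_of_card_eq (hV : finrank F V = d + 2) (hM : finrank F M = d)
    (hP : P ⊆ between M ⊤ (d + 1)) (hcard : #P = q) :
    ∃ G ∈ between M ⊤ (d + 1), G ∉ P ∧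
      ∀ A : Submodule F V, finrank F A = 1 → (∀ H ∈ P, ¬A ≤ H) → A ≤ G := by
  have hall : #(between M ⊤ (d + 1)) = q + 1 := by
    rw [← hM, card_between_finrank_add_one (m := 2) le_top (by rw [finrank_top]; omega),
      numPoints_succ', numPoints_one, mul_one]
  have hone : #(between M ⊤ (d + 1) \ P) = 1 := by
    rw [card_sdiff_of_subset hP]
    omega
  obtain ⟨G, hG⟩ := card_eq_one.1 hone
  obtain ⟨hGM, hGP⟩ := mem_sdiff.1 (hG ▸ mem_singleton_self G)
  refine ⟨G, hGM, hGP, fun A hA hAP => ?_⟩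
  have hPne : P.Nonempty := by
    rw [← card_pos, hcard]
    exact Nat.card_pos
  obtain ⟨H, hH⟩ := hPne
  have hAM : ¬A ≤ M := fun hAM => hAP H hH (hAM.trans (mem_between.1 (hP hH)).1)
  have hMA : M ⊔ A ∈ between M ⊤ (d + 1) \ P := mem_sdiff.2
    ⟨mem_between.2 ⟨le_sup_left, le_top, by rw [finrank_sup_of_finrank_eq_one hA hAM, hM]⟩,
      fun hMA => hAP _ hMA le_sup_right⟩
  rw [hG, mem_singleton] at hMA
  exact hMA ▸ le_sup_right

theorem HyperplaneTangent.exists_hyperplane (ht : HyperplaneTangent k B E H W)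
    (h : IsExtremal k b e B E) (hC : ∀ A ∈ B, IsCenterAt B W A C) (hCX : C ≤ X)
    (hX : X ∈ between ⊥ W k) :
    ∃ G : Submodule F V, finrank F G = 2 * k + 1 ∧ X ≤ G ∧ G ⊓ W ≤ X ∧ ∀ A ∈ B, A ≤ G := by
  obtain ⟨-, hXW, hXk⟩ := mem_between.1 hX
  obtain ⟨A, hA⟩ := h.points_nonempty
  have hV := h.finrank_eq
  have hcoatom : ∀ G ∈ E, finrank F G + 1 = finrank F V := fun G hG => by
    rw [h.finrank_hyperplane G hG, hV]
  have hcard : #(above E X) = q := by rw [(hC A hA).card_above ht h hA hX, if_pos hCX]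
  obtain ⟨hHE, hWH⟩ := mem_above.1 ht.mem
  have hHX : H ∈ above E X := mem_above.2 ⟨hHE, hXW.trans hWH⟩
  obtain ⟨H₂, hH₂, hne⟩ := exists_mem_ne (hcard.symm ▸ Finite.one_lt_card) H
  obtain ⟨hH₂E, hXH₂⟩ := mem_above.1 hH₂
  have hHH₂ : ¬H ≤ H₂ := fun hle => hne (Submodule.eq_of_le_of_finrank_eq hle (by
    rw [h.finrank_hyperplane H hHE, h.finrank_hyperplane H₂ hH₂E])).symm
  have hM := finrank_inf_add_one (hcoatom H₂ hH₂E) hHH₂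
  rw [h.finrank_hyperplane H hHE, Nat.add_right_cancel_iff] at hM
  obtain ⟨G, hG, hGE, hBG⟩ := exists_hyperplane_ge_of_card_eq hV hM (P := above E X)
    (fun G hG => mem_between.2 ⟨ht.inf_le_of_mem_above h hC hCX hX hcard hG hHX hH₂ hne.symm,
      le_top, h.finrank_hyperplane G (mem_above.1 hG).1⟩) hcard
  obtain ⟨hMG, -, hGrank⟩ := mem_between.1 hG
  refine ⟨G, hGrank, (le_inf (hXW.trans hWH) hXH₂).trans hMG, ?_, fun A hA =>
    hBG A (h.finrank_point A hA) fun G hG => h.not_le hA (mem_above.1 hG).1⟩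
  have hGH : ¬G ≤ H := fun hle => hGE (by
    rwa [Submodule.eq_of_le_of_finrank_eq hle (by rw [hGrank, h.finrank_hyperplane H hHE])])
  have hWH₂ : ¬W ≤ H₂ := fun hWH₂ => hne (mem_singleton.1
    (ht.above_eq ▸ mem_above.2 ⟨hH₂E, hWH₂⟩))
  have hGHM : G ⊓ H = H ⊓ H₂ :=
    inf_eq_of_finrank_eq_add_one (hcoatom H hHE) hGH hMG inf_le_left (by rw [hM, hGrank])
  have hWX : W ⊓ H₂ = X :=
    inf_eq_of_finrank_eq_add_one (hcoatom H₂ hH₂E) hWH₂ hXW hXH₂ (by rw [hXk, ht.finrank_eq])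
  calc G ⊓ W ≤ W ⊓ (G ⊓ H) := le_inf inf_le_right (inf_le_inf_left G hWH)
    _ ≤ W ⊓ H₂ := inf_le_inf_left W (hGHM.trans_le inf_le_right)
    _ = X := hWX

/-- A subspace spanned by `B` lies on each of the hyperplanes found above, and these cut `W` in
the `(k - 1)`-spaces through the center `C`; hence it meets `W` in `C` at most. -/
theorem IsExtremal.exists_finrank_le (h : IsExtremal k b e B E) (hk : k ≠ 0) (hb : 1 < b) :
    ∃ U : Submodule F V, finrank F U ≤ k + 2 ∧ ∀ A ∈ B, A ≤ U := by
  obtain ⟨A, hA⟩ := h.points_nonempty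
  obtain ⟨H, hH⟩ := h.hyperplanes_nonempty
  obtain ⟨W, ht⟩ := h.exists_hyperplaneTangent H hH
  obtain ⟨C, hC⟩ := ht.exists_forall_isCenterAt h hb
  have hCW := (hC A hA).le
  have hCrank := (hC A hA).finrank_eq
  have hhyper : ∀ X ∈ between C W k, ∃ G : Submodule F V, finrank F G = 2 * k + 1 ∧ X ≤ G ∧
      G ⊓ W ≤ X ∧ B.sup id ≤ G := fun X hX => by
    obtain ⟨hCX, hXW, hXk⟩ := mem_between.1 hX
    obtain ⟨G, hG, hXG, hGW, hBG⟩ :=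
      ht.exists_hyperplane h hC hCX (mem_between.2 ⟨bot_le, hXW, hXk⟩)
    exact ⟨G, hG, hXG, hGW, Finset.sup_le hBG⟩
  have hUW : B.sup id ⊓ W ≤ C := by
    by_contra hle
    obtain ⟨A', hA', hA'rank, hA'C⟩ := exists_finrank_eq_one_not_le hle
    rw [le_inf_iff] at hA'
    obtain ⟨X, hX, hA'X⟩ := exists_between_not_le hCW ht.finrank_eq hA'rank hA'C hA'.2
    obtain ⟨G, -, -, hGW, hUG⟩ := hhyper X hX
    exact hA'X ((le_inf (hA'.1.trans hUG) hA'.2).trans hGW)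
  refine ⟨B.sup id, ?_, fun A hA => le_sup (f := id) hA⟩
  obtain ⟨X, hCX, hXW, hXk⟩ := exists_finrank_eq_of_le (d := k) hCW (by omega)
    (by rw [ht.finrank_eq]; omega)
  obtain ⟨G, hG, hXG, -, hUG⟩ := hhyper X (mem_between.2 ⟨hCX, hXW, hXk⟩)
  have hsum := Submodule.finrank_sup_add_finrank_inf_eq (B.sup id) X
  have hsup := Submodule.finrank_mono (sup_le hUG hXG)
  have hinf := Submodule.finrank_mono ((inf_le_inf_left (B.sup id) hXW).trans hUW)
  omega

/-- The hyperplanes of `E` miss the `q ^ (k + 1)` points of `B`, which all lie in a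
`(k + 1)`-space `R`; so each of them cuts `R` in the complement of `B`. -/
theorem IsExtremal.exists_le_of_right_eq_one (h : IsExtremal k b 1 B E) (hk : k ≠ 0) :
    ∃ X : Submodule F V, finrank F X = k ∧ ∀ H ∈ E, X ≤ H := by
  have hV := h.finrank_eq
  have hbq : b = q := by have := h.add_eq; omega
  obtain ⟨U, hU, hBU⟩ := h.exists_finrank_le hk (hbq ▸ Finite.one_lt_card)
  obtain ⟨R, hUR, -, hR⟩ := exists_finrank_eq_of_le (d := k + 2) (le_top (a := U)) hU
    (by rw [finrank_top]; omega)
  obtain ⟨A, hA⟩ := h.points_nonempty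
  have hBR : ∀ A ∈ B, A ≤ R := fun A hA => (hBU A hA).trans hUR
  have hrank : ∀ H ∈ E, finrank F ↥(R ⊓ H) = k + 1 := fun H hH => by
    have := finrank_inf_add_one (by rw [h.finrank_hyperplane H hH, hV])
      fun hRH => h.not_le hA hH ((hBR A hA).trans hRH)
    omega
  have hpoints : ∀ H ∈ E, between ⊥ (R ⊓ H) 1 = between ⊥ R 1 \ B := fun H hH => by
    refine eq_of_subset_of_card_le (fun A hA => ?_) ?_
    · obtain ⟨-, hAH, hA⟩ := mem_between.1 hA
      rw [le_inf_iff] at hAH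
      exact mem_sdiff.2 ⟨mem_between.2 ⟨bot_le, hAH.1, hA⟩, fun hAB => h.not_le hAB hH hAH.2⟩
    · rw [card_sdiff_of_subset fun A hA => mem_between.2 ⟨bot_le, hBR A hA, h.finrank_point A hA⟩,
        card_between_bot_one, card_between_bot_one, hR, hrank H hH, h.card_points, hbq,
        ← pow_succ, numPoints_succ _ (k + 1), Nat.add_sub_cancel]
  obtain ⟨H₀, hH₀⟩ := h.hyperplanes_nonempty
  obtain ⟨X, -, hXR, hX⟩ := exists_finrank_eq_of_le (d := k) (bot_le (a := R ⊓ H₀)) (by simp)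
    (by rw [hrank H₀ hH₀]; omega)
  refine ⟨X, hX, fun H hH => hXR.trans (le_trans ?_ (inf_le_right (a := R)))⟩
  by_contra hle
  obtain ⟨A, hA, hArank, hAH⟩ := exists_finrank_eq_one_not_le hle
  have hAmem : A ∈ between ⊥ (R ⊓ H₀) 1 := mem_between.2 ⟨bot_le, hA, hArank⟩
  rw [hpoints H₀ hH₀, ← hpoints H hH] at hAmem
  exact hAH (mem_between.1 hAmem).2.1

theorem IsExtremal.exists_le (h : IsExtremal k b e B E) (hk : k ≠ 0) :
    ∃ X : Submodule F V, finrank F X = k ∧ ∀ H ∈ E, X ≤ H := by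
  obtain rfl | he : e = 1 ∨ 1 < e := by have := h.right_pos; omega
  · exact h.exists_le_of_right_eq_one hk
  · obtain ⟨U', hU, hEU⟩ := h.dual.exists_finrank_le hk he
    obtain ⟨U, rfl⟩ := exists_dualAnnihilator_eq U'
    have hrank := Subspace.finrank_add_finrank_dualAnnihilator_eq U
    rw [h.finrank_eq] at hrank
    obtain ⟨X, -, hXU, hX⟩ := exists_finrank_eq_of_le (d := k) (bot_le (a := U)) (by simp)
      (by omega)
    refine ⟨X, hX, fun H hH => hXU.trans ?_⟩
    exact Subspace.dualAnnihilator_le_dualAnnihilator_iff.1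
      (hEU _ (mem_annihilators.2 ⟨H, hH, rfl⟩))

theorem IsBlocking.exists_le (h : IsBlocking k B E) (hcard : #B + #E ≤ (q + 1) * q ^ k) :
    ∃ X : Submodule F V, finrank F X = k ∧ ∀ H ∈ E, X ≤ H := by
  obtain rfl | hk := eq_or_ne k 0
  · exact ⟨⊥, finrank_bot F V, fun _ _ => bot_le⟩
  obtain ⟨B', hB, E', hE, hmin⟩ := h.exists_isMinimalBlocking
  have hBcard := card_le_card hB
  have hEcard := card_le_card hE
  obtain ⟨b, e, hext⟩ := hmin.exists_isExtremal hk (by omega)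
  have hsum : #B' + #E' = (q + 1) * q ^ k := by
    rw [hext.card_points, hext.card_hyperplanes, ← hext.add_eq]
    ring
  have hEE : E' = E := eq_of_subset_of_card_le hE (by omega)
  exact hEE ▸ hext.exists_le hk

end Span

end ProjBlocking

theorem stmt_19_general {F V : Type*} [Field F] [Finite F] [AddCommGroup V] [Module F V] {k : ℕ}
    (hV : Module.finrank F V = 2 * k + 2) (B0 Bn : Set (Submodule F V))
    (hB0 : ∀ p ∈ B0, Module.finrank F p = 1)
    (hBn : ∀ H ∈ Bn, Module.finrank F H = 2 * k + 1)
    (hblock : ∀ W : Submodule F V, Module.finrank F W = k + 1 →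
      (∃ p ∈ B0, p ≤ W) ∨ (∃ H ∈ Bn, W ≤ H))
    (hsize : B0.ncard + Bn.ncard ≤ (Nat.card F + 1) * Nat.card F ^ k) :
    ∃ sig : Submodule F V, Module.finrank F sig = k ∧ ∀ H ∈ Bn, sig ≤ H := by
  have : FiniteDimensional F V := Module.finite_of_finrank_eq_succ hV
  lift B0 to Finset (Submodule F V) using B0.toFinite
  lift Bn to Finset (Submodule F V) using Bn.toFinite
  simp only [Finset.mem_coe, Set.ncard_coe_finset] at *
  refine ProjBlocking.IsBlocking.exists_le ⟨hV, hB0, hBn, fun W hW => ?_⟩ hsize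
  simpa only [Finset.Nonempty, ProjBlocking.mem_below, ProjBlocking.mem_above] using hblock W hW

/-- Let `B = B0 ∪ Bn` be a blocking set of points and hyperplanes
with respect to `k`-spaces in `PG(2k+1,q)` with `|B| = (q+1)·q^k`.  Then there is a
`(k-1)`-space contained in every hyperplane of `Bn`. -/
theorem stmt_19 {F : Type} [Field F] [Fintype F] (k : ℕ) (hk : 1 ≤ k)
    (B0 Bn : Set (Submodule F (Fin (2 * k + 2) → F)))
    (hB0 : ∀ p ∈ B0, Module.finrank F p = 1)
    (hBn : ∀ H ∈ Bn, Module.finrank F H = 2 * k + 1)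
    (hblock : ∀ W : Submodule F (Fin (2 * k + 2) → F), Module.finrank F W = k + 1 →
      (∃ p ∈ B0, p ≤ W) ∨ (∃ H ∈ Bn, W ≤ H))
    (hsize : B0.ncard + Bn.ncard = (Fintype.card F + 1) * (Fintype.card F) ^ k) :
    ∃ sig : Submodule F (Fin (2 * k + 2) → F), Module.finrank F sig = k ∧ ∀ H ∈ Bn, sig ≤ H :=
  stmt_19_general (Module.finrank_fin_fun F) B0 Bn hB0 hBn hblock
    (by rw [Nat.card_eq_fintype_card, hsize])
end
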